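/- Let T > 0, let h : [0,∞) → ℝ be continuous and bounded, let g satisfy (g1), be regularly oscillating at zero, and satisfy lim_{s→0⁺} g(s)/s = 0 and lim_{s→+∞} g(s)/s = +∞. Let a : [0,T] → ℝ be continuous satisfying (a1) and (a2). Then there exists a C² function u : [0,T] → ℝ with u(x) > 0 for all x ∈ [0,T], u''(x) + h(u(x)) u'(x) + a(x) g(u(x)) = 0 for all x ∈ [0,T], u(0) = u(T), and u'(0) = u'(T); that is, the periodic problem for the Liénard type equation u'' + h(u) u' + a(x) g(u) = 0 has at least one positive solution. -/

import Mathlib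

open MeasureTheory Set Filter

/-- Condition (g1): `g : [0,∞) → [0,∞)` is continuous, `g 0 = 0`, `g > 0` on `(0,∞)`. -/
def CondG1 (g : ℝ → ℝ) : Prop :=
  ContinuousOn g (Ici (0:ℝ)) ∧ (∀ s : ℝ, 0 ≤ s → 0 ≤ g s) ∧ g 0 = 0 ∧
    ∀ s : ℝ, 0 < s → 0 < g s

/-- `g` is regularly oscillating at zero. -/
def RegOscAtZero (g : ℝ → ℝ) : Prop :=
  ∀ ε : ℝ, 0 < ε → ∃ δ > (0:ℝ), ∃ η > (0:ℝ), ∀ s ω : ℝ,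
    0 < s → s < δ → |ω - 1| < η → |g (ω * s) / g s - 1| < ε

/-- `liminf_{s → +∞} g(s)/s`, computed in `EReal`. -/
noncomputable def GrowthLiminf (g : ℝ → ℝ) : EReal :=
  liminf (fun s : ℝ => ((g s / s : ℝ) : EReal)) atTop

/-- `limsup_{s → +∞} g(s)/s`, computed in `EReal`. -/
noncomputable def GrowthLimsup (g : ℝ → ℝ) : EReal :=
  limsup (fun s : ℝ => ((g s / s : ℝ) : EReal)) atTop

/-- Condition (a1): there are `m ≥ 1` pairwise disjoint closed intervals in `[0,T]`
on which `a ≥ 0` a.e. and `a` is not a.e. zero, while `a ≤ 0` a.e. outside them. -/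
def CondA1 (T : ℝ) (a : ℝ → ℝ) : Prop :=
  ∃ (m : ℕ) (σ τ : Fin m → ℝ), 0 < m ∧
    (∀ i, 0 ≤ σ i ∧ σ i ≤ τ i ∧ τ i ≤ T) ∧
    (Pairwise fun i j => Disjoint (Icc (σ i) (τ i)) (Icc (σ j) (τ j))) ∧
    (∀ i, ∀ᵐ x ∂(volume.restrict (Icc (σ i) (τ i))), 0 ≤ a x) ∧
    (∀ i, ¬ (∀ᵐ x ∂(volume.restrict (Icc (σ i) (τ i))), a x = 0)) ∧
    (∀ᵐ x ∂(volume.restrict (Icc (0:ℝ) T \ ⋃ i, Icc (σ i) (τ i))), a x ≤ 0)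

/-!
Truncate `g` to linear growth and write the equation as a planar system on `ℂ`. Its solutions need
not be unique, so the index of the period map on a circle is replaced by the winding number of the
displacement of a fine Euler scheme; a limit of fixed points of these schemes is a periodic
solution, so this number is invariant under homotopies without periodic solutions on the circle.

On a large circle it is `0`: add `l a⁺` to the forcing. On each hump of `a` a solution obeys a
Harnack inequality, because `u'` times an integrating factor is monotone there, and since a
maximum is attained on a hump, superlinear growth bounds all periodic solutions and excludes them
for large `l`. On a small circle it is not `0`: deform `a` to `-1` keeping its integral negative,
and then the system to the saddle `z' = i z̄`. Small positive solutions are excluded along the way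
because they are so flat that, by regular oscillation, `g(u)` is almost constant, whereas
`∫ a g(u) = 0`. Hence some solution does not start at `0`, and every such solution is positive
and lies below the truncation level.
-/

open Topology

section Euler

variable {E : Type*} [NormedAddCommGroup E] [NormedSpace ℝ E]

/-- `Z` solves `z' = f t z` on `[0, T]` and satisfies the periodic boundary condition. -/
def IsPeriodicSolution (T : ℝ) (f : ℝ → E → E) (Z : ℝ → E) : Prop :=
  IsIntegralCurveOn Z f (Icc 0 T) ∧ Z 0 = Z T

/-- The `k`-th iterate of the explicit Euler scheme of step `τ` for `z' = f t z`, started at `z`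
at time `0`. Its fixed points for `k = N`, `τ = T / N` replace those of the Poincaré map, which
need not be defined since `f` is merely continuous. -/
def eulerIter (f : ℝ → E → E) (τ : ℝ) (z : E) : ℕ → E
  | 0 => z
  | k + 1 => eulerIter f τ z k + τ • f (τ * k) (eulerIter f τ z k)

lemma continuous_eulerIter {X : Type*} [TopologicalSpace X] {f : X → ℝ → E → E}
    (hf : Continuous ↿f) (τ : ℝ) (k : ℕ) :
    Continuous fun p : X × E => eulerIter (f p.1) τ p.2 k := by
  induction k with
  | zero => exact continuous_snd
  | succ k ih =>
    exact ih.add ((hf.comp (continuous_fst.prodMk (continuous_const.prodMk ih))).const_smul τ)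

lemma one_add_norm_eulerIter_le {f : ℝ → E → E} {C : ℝ}
    (hf : ∀ t z, ‖f t z‖ ≤ C * (1 + ‖z‖)) {τ : ℝ} (hτ : 0 ≤ τ) (z : E) (k : ℕ) :
    1 + ‖eulerIter f τ z k‖ ≤ Real.exp (C * (τ * k)) * (1 + ‖z‖) := by
  induction k with
  | zero => simp [eulerIter]
  | succ k ih =>
    set w := eulerIter f τ z k
    calc 1 + ‖w + τ • f (τ * k) w‖ ≤ 1 + (‖w‖ + τ * (C * (1 + ‖w‖))) := by
          grw [norm_add_le, norm_smul, Real.norm_of_nonneg hτ, hf]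
      _ = (C * τ + 1) * (1 + ‖w‖) := by ring
      _ ≤ Real.exp (C * τ) * (Real.exp (C * (τ * k)) * (1 + ‖z‖)) := by
          grw [Real.add_one_le_exp, ih]
      _ = Real.exp (C * (τ * ↑(k + 1))) * (1 + ‖z‖) := by
          rw [← mul_assoc, ← Real.exp_add]
          push_cast
          ring_nf

lemma norm_eulerIter_sub_sub_smul_le {f : ℝ → E → E} {τ : ℝ} (hτ : 0 ≤ τ) {z v : E} {ε : ℝ}
    {i j : ℕ} (h : ∀ k ∈ Ico (min i j) (max i j), ‖f (τ * k) (eulerIter f τ z k) - v‖ ≤ ε) :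
    ‖eulerIter f τ z j - eulerIter f τ z i - (τ * j - τ * i) • v‖ ≤ ε * |τ * j - τ * i| := by
  wlog hij : i ≤ j generalizing i j
  · rw [min_comm, max_comm] at h
    rw [show eulerIter f τ z j - eulerIter f τ z i - (τ * j - τ * i) • v =
      -(eulerIter f τ z i - eulerIter f τ z j - (τ * i - τ * j) • v) by module, norm_neg,
      abs_sub_comm]
    exact this h (le_of_not_ge hij)
  rw [min_eq_left hij, max_eq_right hij] at h
  rw [abs_of_nonneg (by rw [← mul_sub]; exact mul_nonneg hτ (by simpa using hij))]
  induction j, hij using Nat.le_induction with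
  | base => simp
  | succ k hik ih =>
    set w := eulerIter f τ z k
    have hstep : eulerIter f τ z (k + 1) - eulerIter f τ z i - (τ * ↑(k + 1) - τ * i) • v =
        (w - eulerIter f τ z i - (τ * k - τ * i) • v) + τ • (f (τ * k) w - v) := by
      simp only [eulerIter, w]
      push_cast
      module
    rw [hstep]
    grw [norm_add_le, norm_smul, Real.norm_of_nonneg hτ,
      ih fun m hm => h m ⟨hm.1, hm.2.trans k.lt_succ_self⟩, h k ⟨hik, k.lt_succ_self⟩]
    push_cast
    exact le_of_eq (by ring)

lemma norm_eulerIter_sub_le {f : ℝ → E → E} {τ : ℝ} (hτ : 0 ≤ τ) {z : E} {L : ℝ} {i j : ℕ}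
    (h : ∀ k < max i j, ‖f (τ * k) (eulerIter f τ z k)‖ ≤ L) :
    ‖eulerIter f τ z j - eulerIter f τ z i‖ ≤ L * |τ * j - τ * i| := by
  simpa using norm_eulerIter_sub_sub_smul_le (v := (0 : E)) hτ
    fun k (hk : k ∈ Ico (min i j) (max i j)) => by simpa using h k hk.2

lemma mul_floor_div_mem_Ioc {τ t : ℝ} (hτ : 0 < τ) (ht : 0 ≤ t) :
    τ * ⌊t / τ⌋₊ ∈ Ioc (t - τ) t := by
  have hle := Nat.floor_le (div_nonneg ht hτ.le)
  have hlt := Nat.lt_floor_add_one (t / τ)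
  rw [le_div_iff₀ hτ] at hle
  rw [div_lt_iff₀ hτ] at hlt
  constructor <;> linarith

lemma abs_mul_sub_mul_floor_div_le {τ s t : ℝ} (hτ : 0 < τ) (hs : 0 ≤ s) (ht : 0 ≤ t) {k : ℕ}
    (hk : k ∈ Icc (min ⌊t / τ⌋₊ ⌊s / τ⌋₊) (max ⌊t / τ⌋₊ ⌊s / τ⌋₊)) :
    |τ * k - τ * ⌊t / τ⌋₊| ≤ |s - t| + τ := by
  have hs' := mul_floor_div_mem_Ioc hτ hs
  have ht' := mul_floor_div_mem_Ioc hτ ht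
  have hlo : min (τ * ⌊t / τ⌋₊) (τ * ⌊s / τ⌋₊) ≤ τ * k := by
    rw [← mul_min_of_nonneg _ _ hτ.le]
    exact mul_le_mul_of_nonneg_left (by exact_mod_cast hk.1) hτ.le
  have hhi : τ * k ≤ max (τ * ⌊t / τ⌋₊) (τ * ⌊s / τ⌋₊) := by
    rw [← mul_max_of_nonneg _ _ hτ.le]
    exact mul_le_mul_of_nonneg_left (by exact_mod_cast hk.2) hτ.le
  rw [abs_le]
  rcases abs_cases (s - t) with h | h <;>
    rcases min_cases (τ * ⌊t / τ⌋₊) (τ * ⌊s / τ⌋₊) with h' | h' <;>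
    rcases max_cases (τ * ⌊t / τ⌋₊) (τ * ⌊s / τ⌋₊) with h'' | h'' <;>
    constructor <;> linarith [hs'.1, hs'.2, ht'.1, ht'.2]

lemma tendsto_mul_floor_div {ι : Type*} {l : Filter ι} {τ : ι → ℝ} (hτ₀ : ∀ i, 0 < τ i)
    (hτ : Tendsto τ l (𝓝 0)) {t : ℝ} (ht : 0 ≤ t) :
    Tendsto (fun i => τ i * ⌊t / τ i⌋₊) l (𝓝 t) := by
  refine tendsto_of_tendsto_of_tendsto_of_le_of_le (by simpa using tendsto_const_nhds.sub hτ)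
    tendsto_const_nhds (fun i => (mul_floor_div_mem_Ioc (hτ₀ i) ht).1.le)
    fun i => (mul_floor_div_mem_Ioc (hτ₀ i) ht).2

section Limit

variable {ι : Type*} {l : Filter ι} [l.NeBot] {τ : ι → ℝ} {z : ι → E} {T L : ℝ} {y : ℝ → E}

lemma norm_sub_sub_smul_le_of_tendsto_eulerIter {F : ι → ℝ → E → E} (hτ₀ : ∀ i, 0 < τ i)
    (hτ : Tendsto τ l (𝓝 0))
    (hL : ∀ i (k : ℕ), τ i * k ≤ T → ‖F i (τ i * k) (eulerIter (F i) (τ i) (z i) k)‖ ≤ L)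
    (hy : ∀ t ∈ Icc 0 T,
      Tendsto (fun i => eulerIter (F i) (τ i) (z i) ⌊t / τ i⌋₊) l (𝓝 (y t)))
    {t : ℝ} (ht : t ∈ Icc 0 T) {v : E} {ε δ : ℝ} (hδ : 0 < δ)
    (hf : ∀ᶠ i in l, ∀ s w, |s - t| < δ → ‖w - y t‖ < δ → ‖F i s w - v‖ ≤ ε)
    {s : ℝ} (hs : s ∈ Icc 0 T) (hst : |s - t| < δ / 2) (hst' : L * |s - t| < δ / 2) :
    ‖y s - y t - (s - t) • v‖ ≤ ε * |s - t| := by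
  have hts := (tendsto_mul_floor_div hτ₀ hτ hs.1).sub (tendsto_mul_floor_div hτ₀ hτ ht.1)
  refine le_of_tendsto_of_tendsto (((hy s hs).sub (hy t ht)).sub (hts.smul_const v)).norm
    (hts.abs.const_mul ε) ?_
  have hsmall : ∀ᶠ i in l, τ i < δ / 4 := hτ.eventually_lt_const (by linarith)
  have hclose : ∀ᶠ i in l, L * (|s - t| + τ i) +
      ‖eulerIter (F i) (τ i) (z i) ⌊t / τ i⌋₊ - y t‖ < δ := by
    have := ((hτ.const_add |s - t|).const_mul L).add ((hy t ht).sub_const (y t)).norm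
    refine this.eventually_lt_const ?_
    rw [sub_self, norm_zero]
    linarith
  filter_upwards [hf, hsmall, hclose] with i hfi hτi hci
  have hL₀ : 0 ≤ L := (norm_nonneg _).trans (hL i 0 (by simpa using ht.1.trans ht.2))
  have hm := mul_floor_div_mem_Ioc (hτ₀ i) ht.1
  have hmax : τ i * ↑(max ⌊t / τ i⌋₊ ⌊s / τ i⌋₊) ≤ T := by
    rw [Nat.cast_max, mul_max_of_nonneg _ _ (hτ₀ i).le]
    exact max_le (hm.2.trans ht.2) ((mul_floor_div_mem_Ioc (hτ₀ i) hs.1).2.trans hs.2)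
  refine norm_eulerIter_sub_sub_smul_le (hτ₀ i).le fun k hk => ?_
  have hkm := abs_mul_sub_mul_floor_div_le (hτ₀ i) hs.1 ht.1 (Ico_subset_Icc_self hk)
  have hmove : ‖eulerIter (F i) (τ i) (z i) k - eulerIter (F i) (τ i) (z i) ⌊t / τ i⌋₊‖
      ≤ L * |τ i * k - τ i * ⌊t / τ i⌋₊| :=
    norm_eulerIter_sub_le (hτ₀ i).le fun k' hk' => hL i k' <| le_trans
      (mul_le_mul_of_nonneg_left
        (by exact_mod_cast hk'.le.trans (max_le (le_max_left _ _) hk.2.le)) (hτ₀ i).le) hmax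
  refine hfi _ _ ?_ ?_
  · rw [abs_le] at hkm
    rw [abs_lt]
    constructor <;> linarith [hm.1, hm.2]
  · grw [hkm] at hmove
    linarith [norm_sub_le_norm_sub_add_norm_sub (eulerIter (F i) (τ i) (z i) k)
      (eulerIter (F i) (τ i) (z i) ⌊t / τ i⌋₊) (y t)]

variable {X : Type*} [TopologicalSpace X]

theorem isIntegralCurveOn_of_tendsto_eulerIter {f : X → ℝ → E → E} (hf : Continuous ↿f)
    {x : ι → X} {x₀ : X} (hx : Tendsto x l (𝓝 x₀)) (hτ₀ : ∀ i, 0 < τ i) (hτ : Tendsto τ l (𝓝 0))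
    (hL : ∀ i (k : ℕ), τ i * k ≤ T → ‖f (x i) (τ i * k) (eulerIter (f (x i)) (τ i) (z i) k)‖ ≤ L)
    (hy : ∀ t ∈ Icc 0 T,
      Tendsto (fun i => eulerIter (f (x i)) (τ i) (z i) ⌊t / τ i⌋₊) l (𝓝 (y t))) :
    IsIntegralCurveOn y (f x₀) (Icc 0 T) := by
  intro t ht
  rw [hasDerivWithinAt_iff_isLittleO, Asymptotics.isLittleO_iff]
  intro ε hε
  obtain ⟨U, hU, V, hV, hUV⟩ := mem_nhds_prod_iff.1 <|
    (hf.tendsto (x₀, t, y t)) (Metric.closedBall_mem_nhds (f x₀ t (y t)) hε)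
  obtain ⟨δ, hδ, hδV⟩ := Metric.mem_nhds_iff.1 hV
  have hfδ : ∀ᶠ i in l, ∀ s w, |s - t| < δ → ‖w - y t‖ < δ → ‖f (x i) s w - f x₀ t (y t)‖ ≤ ε := by
    filter_upwards [hx hU] with i hi s w hs hw
    have hsw : (s, w) ∈ V := hδV (by
      rw [Metric.mem_ball, Prod.dist_eq, Real.dist_eq, dist_eq_norm]
      exact max_lt hs hw)
    exact mem_closedBall_iff_norm.1 (hUV (mk_mem_prod hi hsw))
  have h₁ : ∀ᶠ s in 𝓝 t, |s - t| < δ / 2 :=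
    (by fun_prop : Continuous fun s => |s - t|).tendsto' t 0 (by simp) |>.eventually_lt_const
      (half_pos hδ)
  have h₂ : ∀ᶠ s in 𝓝 t, L * |s - t| < δ / 2 :=
    (by fun_prop : Continuous fun s => L * |s - t|).tendsto' t 0 (by simp) |>.eventually_lt_const
      (half_pos hδ)
  filter_upwards [self_mem_nhdsWithin, nhdsWithin_le_nhds h₁, nhdsWithin_le_nhds h₂]
    with s hs hst hst'
  exact norm_sub_sub_smul_le_of_tendsto_eulerIter hτ₀ hτ hL hy ht hδ hfδ hs hst hst'

end Limit

variable {X : Type*} [TopologicalSpace X]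

theorem exists_isPeriodicSolution_of_eulerIter_eq [ProperSpace E] {f : X → ℝ → E → E}
    (hf : Continuous ↿f) {C : ℝ} (hC : ∀ x t z, ‖f x t z‖ ≤ C * (1 + ‖z‖)) {T : ℝ} (hT : 0 < T)
    {K : Set (X × E)} (hK : IsCompact K) {φ : ℕ → ℕ} (hφ₀ : ∀ n, 0 < φ n)
    (hφ : Tendsto φ atTop atTop) {p : ℕ → X × E} (hpK : ∀ n, p n ∈ K)
    (hfix : ∀ n, eulerIter (f (p n).1) (T / φ n) (p n).2 (φ n) = (p n).2) :
    ∃ q ∈ K, ∃ Z, IsPeriodicSolution T (f q.1) Z ∧ Z 0 = q.2 := by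
  set τ : ℕ → ℝ := fun n => T / φ n
  have hτ₀ : ∀ n, 0 < τ n := fun n => div_pos hT (by exact_mod_cast hφ₀ n)
  let l : Ultrafilter ℕ := hyperfilter ℕ
  have hτ : Tendsto τ l (𝓝 0) :=
    (tendsto_const_nhds.div_atTop (tendsto_natCast_atTop_atTop.comp hφ)).mono_left
      Nat.hyperfilter_le_atTop
  obtain ⟨q, hqK, hq : Tendsto p l (𝓝 q)⟩ :=
    hK.ultrafilter_le_nhds' (l.map p) (mem_map.2 (univ_mem' hpK))
  obtain ⟨R, hR⟩ := (hK.image continuous_snd).isBounded.exists_norm_le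
  have hC₀ : 0 ≤ C := by simpa using (norm_nonneg _).trans (hC q.1 0 0)
  set M := Real.exp (C * T) * (1 + R)
  have hbound : ∀ n (k : ℕ), τ n * k ≤ T →
      1 + ‖eulerIter (f (p n).1) (τ n) (p n).2 k‖ ≤ M := fun n k hk => by
    grw [one_add_norm_eulerIter_le (hC _) (hτ₀ n).le, hk, hR _ (mem_image_of_mem _ (hpK n))]
  have hlim : ∀ t ∈ Icc 0 T, ∃ w, Tendsto
      (fun n => eulerIter (f (p n).1) (τ n) (p n).2 ⌊t / τ n⌋₊) l (𝓝 w) := fun t ht => by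
    have hmem : ∀ n, eulerIter (f (p n).1) (τ n) (p n).2 ⌊t / τ n⌋₊ ∈ Metric.closedBall 0 M :=
      fun n => mem_closedBall_zero_iff.2 <| by
        linarith [hbound n ⌊t / τ n⌋₊ ((mul_floor_div_mem_Ioc (hτ₀ n) ht.1).2.trans ht.2)]
    obtain ⟨w, -, hw⟩ := (isCompact_closedBall (0 : E) M).ultrafilter_le_nhds' (l.map _)
      (mem_map.2 (univ_mem' hmem))
    exact ⟨w, hw⟩
  choose! Z hZ using hlim
  have hsol : IsIntegralCurveOn Z (f q.1) (Icc 0 T) :=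
    isIntegralCurveOn_of_tendsto_eulerIter hf ((continuous_fst.tendsto q).comp hq) hτ₀ hτ
      (L := C * M)
      (fun n k hk => (hC _ _ _).trans (mul_le_mul_of_nonneg_left (hbound n k hk) hC₀)) hZ
  have hsnd : Tendsto (fun n => (p n).2) l (𝓝 q.2) := (continuous_snd.tendsto q).comp hq
  have hZ₀ : Z 0 = q.2 :=
    tendsto_nhds_unique (hZ 0 ⟨le_rfl, hT.le⟩) (by simpa [eulerIter] using hsnd)
  have hZT : Z T = q.2 := by
    refine tendsto_nhds_unique (hZ T ⟨hT.le, le_rfl⟩) (hsnd.congr fun n => ?_)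
    rw [div_div_cancel₀ hT.ne', Nat.floor_natCast, hfix]
  exact ⟨q, hqK, Z, ⟨hsol, hZ₀.trans hZT.symm⟩, hZ₀⟩

theorem eventually_eulerIter_ne [ProperSpace E] {f : X → ℝ → E → E} (hf : Continuous ↿f) {C : ℝ}
    (hC : ∀ x t z, ‖f x t z‖ ≤ C * (1 + ‖z‖)) {T : ℝ} (hT : 0 < T) {K : Set (X × E)}
    (hK : IsCompact K) (hno : ∀ p ∈ K, ∀ Z, IsPeriodicSolution T (f p.1) Z → Z 0 ≠ p.2) :
    ∀ᶠ N : ℕ in atTop, ∀ p ∈ K, eulerIter (f p.1) (T / N) p.2 N ≠ p.2 := by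
  by_contra hcon
  obtain ⟨φ, hφ, hφp⟩ := extraction_of_frequently_atTop
    ((not_eventually.1 hcon).and_eventually (eventually_gt_atTop 0))
  have hex : ∀ n, ∃ p ∈ K, eulerIter (f p.1) (T / φ n) p.2 (φ n) = p.2 := fun n => by
    simpa only [not_forall, ne_eq, not_not, exists_prop] using (hφp n).1
  choose p hpK hfix using hex
  obtain ⟨q, hqK, Z, hZ, hZ₀⟩ := exists_isPeriodicSolution_of_eulerIter_eq hf hC hT hK
    (fun n => (hφp n).2) hφ.tendsto_atTop hpK hfix
  exact hno q hqK Z hZ hZ₀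

end Euler

section ContinuousLog

/-- `γ` has a continuous logarithm: it avoids `0` and has winding number `0` around it. -/
def HasContinuousLog (γ : Circle → ℂ) : Prop :=
  ∃ L : C(Circle, ℂ), ∀ z, Complex.exp (L z) = γ z

lemma hasContinuousLog_const {c : ℂ} (hc : c ≠ 0) : HasContinuousLog fun _ => c :=
  ⟨.const _ (Complex.log c), fun _ => Complex.exp_log hc⟩

lemma HasContinuousLog.const_mul {γ : Circle → ℂ} (hγ : HasContinuousLog γ) {c : ℂ} (hc : c ≠ 0) :
    HasContinuousLog fun z => c * γ z := by
  obtain ⟨L, hL⟩ := hγ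
  refine ⟨L + .const _ (Complex.log c), fun z => ?_⟩
  rw [ContinuousMap.add_apply, ContinuousMap.const_apply, Complex.exp_add, hL,
    Complex.exp_log hc, mul_comm]

lemma HasContinuousLog.homotopy {H : unitInterval × Circle → ℂ} (hH : Continuous H)
    (hH₀ : ∀ q, H q ≠ 0) (hlog : HasContinuousLog fun z => H (0, z)) :
    HasContinuousLog fun z => H (1, z) := by
  obtain ⟨L, hL⟩ := hlog
  let H' : C(unitInterval × Circle, {z : ℂ // z ≠ 0}) := ⟨fun q => ⟨H q, hH₀ q⟩, by fun_prop⟩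
  have hL' : ∀ z, H' (0, z) = (⟨Complex.exp (L z), Complex.exp_ne_zero _⟩ : {z : ℂ // z ≠ 0}) :=
    fun z => Subtype.ext (hL z).symm
  have hcov := Complex.isCoveringMap_exp
  let M := hcov.liftHomotopy H' L hL'
  refine ⟨⟨fun z => M (1, z), by fun_prop⟩, fun z => ?_⟩
  exact congr_arg Subtype.val (congr_fun (hcov.liftHomotopy_lifts H' L hL') (1, z))

lemma not_hasContinuousLog_conj : ¬ HasContinuousLog fun z => starRingEnd ℂ z := by
  rintro ⟨L, hL⟩
  have hlift : (fun θ : ℝ => L (Circle.exp θ)) = fun θ : ℝ => L 1 - θ * Complex.I := by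
    refine Complex.isCoveringMap_exp.eq_of_comp_eq (by fun_prop) (by fun_prop) ?_ 0 (by simp)
    funext θ
    refine Subtype.ext ?_
    simp only [Function.comp_apply, hL, Circle.coe_exp, Circle.coe_one, Complex.exp_sub, map_one,
      ← Complex.exp_conj, map_mul, Complex.conj_ofReal, Complex.conj_I, mul_neg, Complex.exp_neg,
      one_div]
  have hperiod : L 1 = L 1 - (2 * Real.pi : ℝ) * Complex.I := by
    simpa only [Circle.exp_two_pi] using congr_fun hlift (2 * Real.pi)
  simpa [Real.pi_ne_zero] using sub_eq_self.1 hperiod.symm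

lemma not_hasContinuousLog_add_conj {p q : ℂ} (hpq : ‖p‖ < ‖q‖) :
    ¬ HasContinuousLog fun z : Circle => p * z + q * starRingEnd ℂ z := by
  intro hlog
  have hq : q ≠ 0 := norm_pos_iff.1 ((norm_nonneg p).trans_lt hpq)
  have hH₀ : ∀ s : unitInterval × Circle,
      ((1 - s.1 : ℝ) : ℂ) * p * s.2 + q * starRingEnd ℂ s.2 ≠ 0 := fun ⟨s, z⟩ hz => by
    have hnorm := congr_arg norm (eq_neg_of_add_eq_zero_left hz)
    simp only [norm_neg, norm_mul, RCLike.norm_conj, Circle.norm_coe, mul_one,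
      Complex.norm_real] at hnorm
    rw [Real.norm_of_nonneg (by linarith [s.2.2])] at hnorm
    nlinarith [s.2.1, norm_nonneg p]
  have hconj := HasContinuousLog.homotopy
    (H := fun s => ((1 - s.1 : ℝ) : ℂ) * p * s.2 + q * starRingEnd ℂ s.2) (by fun_prop) hH₀
    (by simpa using hlog)
  refine not_hasContinuousLog_conj ?_
  simpa [inv_mul_cancel_left₀ hq] using hconj.const_mul (inv_ne_zero hq)

end ContinuousLog

section PeriodicIndex

/-- The displacement of the Euler scheme, in a large number of steps, has winding number `0` on
the circle of radius `ρ`: the index on that circle of the period map of `z' = f t z`, which is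
itself not defined for lack of uniqueness, is `0`. -/
def HasZeroPeriodicIndex (T : ℝ) (f : ℝ → ℂ → ℂ) (ρ : ℝ) : Prop :=
  ∀ᶠ N : ℕ in atTop,
    HasContinuousLog fun w : Circle => eulerIter f (T / N) (ρ * w) N - ρ * w

variable {T : ℝ} {C : ℝ}

theorem HasZeroPeriodicIndex.homotopy (hT : 0 < T) {f : unitInterval → ℝ → ℂ → ℂ}
    (hf : Continuous ↿f) (hC : ∀ s t z, ‖f s t z‖ ≤ C * (1 + ‖z‖)) {ρ : unitInterval → ℝ}
    (hρ : Continuous ρ) (hρ₀ : ∀ s, 0 ≤ ρ s)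
    (hno : ∀ s Z, IsPeriodicSolution T (f s) Z → ‖Z 0‖ ≠ ρ s)
    (h0 : HasZeroPeriodicIndex T (f 0) (ρ 0)) : HasZeroPeriodicIndex T (f 1) (ρ 1) := by
  let c : unitInterval × Circle → unitInterval × ℂ := fun q => (q.1, ρ q.1 * q.2)
  have hc : Continuous c := by fun_prop
  have hne := eventually_eulerIter_ne hf hC hT (isCompact_range hc) <| by
    rintro - ⟨⟨s, w⟩, rfl⟩ Z hZ hZ₀
    refine hno s Z hZ ?_
    simp [hZ₀, c, abs_of_nonneg (hρ₀ s), Circle.norm_coe]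
  filter_upwards [h0, hne] with N hlog hN
  refine HasContinuousLog.homotopy
    (H := fun q => eulerIter (f q.1) (T / N) (ρ q.1 * q.2) N - ρ q.1 * q.2) ?_
    (fun q => sub_ne_zero.2 (hN _ (mem_range_self q))) hlog
  exact ((continuous_eulerIter hf (T / N) N).comp hc).sub (continuous_snd.comp hc)

theorem hasZeroPeriodicIndex_zero (hT : 0 < T) {f : ℝ → ℂ → ℂ} (hf : Continuous ↿f)
    (hC : ∀ t z, ‖f t z‖ ≤ C * (1 + ‖z‖)) (hno : ∀ Z, IsPeriodicSolution T f Z → Z 0 ≠ 0) :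
    HasZeroPeriodicIndex T f 0 := by
  have hne := eventually_eulerIter_ne (X := Unit) (f := fun _ => f) (hf.comp continuous_snd)
    (fun _ => hC) hT (isCompact_singleton (x := ((), (0 : ℂ)))) (by simpa using hno)
  filter_upwards [hne] with N hN
  simpa using hasContinuousLog_const (hN _ rfl)

lemma eulerIter_saddle (τ : ℝ) (z : ℂ) (k : ℕ) :
    eulerIter (fun _ z => Complex.I * starRingEnd ℂ z) τ z k =
      (((1 + τ) ^ k + (1 - τ) ^ k) / 2 : ℝ) * z +
        (((1 + τ) ^ k - (1 - τ) ^ k) / 2 : ℝ) * (Complex.I * starRingEnd ℂ z) := by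
  induction k with
  | zero => simp [eulerIter]
  | succ k ih =>
    simp only [eulerIter]
    rw [ih, Complex.real_smul]
    simp only [map_add, map_mul, Complex.conj_ofReal, Complex.conj_I, Complex.conj_conj]
    push_cast
    linear_combination (-(τ * z * (((1 : ℂ) + τ) ^ k - (1 - τ) ^ k) / 2)) * Complex.I_sq

theorem not_hasZeroPeriodicIndex_saddle (hT : 0 < T) {ρ : ℝ} (hρ : 0 < ρ) :
    ¬ HasZeroPeriodicIndex T (fun _ z => Complex.I * starRingEnd ℂ z) ρ := by
  intro hindex
  have hτ : Tendsto (fun N : ℕ => T / N) atTop (𝓝 0) := tendsto_const_div_atTop_nhds_zero_nat T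
  obtain ⟨N, hlog, hN, hτ₁⟩ :=
    (hindex.and ((eventually_gt_atTop 0).and (hτ.eventually_lt_const one_pos))).exists
  have hτ₀ : 0 < T / N := div_pos hT (by exact_mod_cast hN)
  set τ := T / N
  have hplus : 1 < (1 + τ) ^ N := one_lt_pow₀ (by linarith) hN.ne'
  have hminus : (1 - τ) ^ N < 1 := pow_lt_one₀ (by linarith) (by linarith) hN.ne'
  refine not_hasContinuousLog_add_conj (p := (ρ * (((1 + τ) ^ N + (1 - τ) ^ N) / 2 - 1) : ℝ))
    (q := (ρ * (((1 + τ) ^ N - (1 - τ) ^ N) / 2) : ℝ) * Complex.I) ?_ ?_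
  · rw [norm_mul, Complex.norm_I, mul_one, Complex.norm_real, Complex.norm_real, norm_mul, norm_mul]
    refine mul_lt_mul_of_pos_left ?_ (norm_pos_iff.2 hρ.ne')
    rw [Real.norm_eq_abs, Real.norm_of_nonneg (by linarith), abs_lt]
    constructor <;> linarith
  · convert hlog using 2 with w
    rw [eulerIter_saddle, map_mul, Complex.conj_ofReal]
    push_cast
    ring

end PeriodicIndex

section Lienard

/-- `u` solves `u'' + h(u) u' + f(t, u) = 0` on `[0, T]` with periodic boundary conditions, and
`v = u'`. -/
structure IsPeriodicLienard (T : ℝ) (h : ℝ → ℝ) (f : ℝ → ℝ → ℝ) (u v : ℝ → ℝ) : Prop where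
  hasDerivWithinAt_fst : ∀ t ∈ Icc 0 T, HasDerivWithinAt u (v t) (Icc 0 T) t
  hasDerivWithinAt_snd : ∀ t ∈ Icc 0 T,
    HasDerivWithinAt v (-(h (u t) * v t) - f t (u t)) (Icc 0 T) t
  fst_periodic : u 0 = u T
  snd_periodic : v 0 = v T

lemma deriv_eq_zero_of_nonneg_of_periodic {T : ℝ} (hT : 0 < T) {W W' : ℝ → ℝ}
    (hW : ∀ t ∈ Icc 0 T, HasDerivWithinAt W (W' t) (Icc 0 T) t) (hW' : ∀ t ∈ Icc 0 T, 0 ≤ W' t)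
    (hper : W 0 = W T) : ∀ t ∈ Icc 0 T, W' t = 0 := by
  have hmono : MonotoneOn W (Icc 0 T) :=
    monotoneOn_of_hasDerivWithinAt_nonneg (convex_Icc 0 T)
      (fun t ht => (hW t ht).continuousWithinAt)
      (fun t ht => (hW t (interior_subset ht)).mono interior_subset)
      fun t ht => hW' t (interior_subset ht)
  have hconst : ∀ t ∈ Icc 0 T, W t = W 0 := fun t ht =>
    le_antisymm ((hmono ht (right_mem_Icc.2 hT.le) ht.2).trans hper.ge)
      (hmono (left_mem_Icc.2 hT.le) ht ht.1)
  exact fun t ht => (uniqueDiffOn_Icc hT t ht).eq_deriv _ (hW t ht)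
    ((hasDerivWithinAt_const t _ (W 0)).congr hconst (hconst t ht))

lemma hasDerivAt_sq_max_zero (s : ℝ) :
    HasDerivAt (fun s : ℝ => (max s 0) ^ 2) (2 * max s 0) s := by
  rcases lt_trichotomy s 0 with hs | rfl | hs
  · refine ((hasDerivAt_const s (0 : ℝ)).congr_of_eventuallyEq ?_).congr_deriv ?_
    · filter_upwards [Iio_mem_nhds hs] with x hx
      simp [max_eq_right (mem_Iio.1 hx).le]
    · simp [max_eq_right hs.le]
  · rw [hasDerivAt_iff_isLittleO]
    have hle : (fun x : ℝ => (max x 0) ^ 2) =O[𝓝 0] fun x => x ^ 2 :=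
      Asymptotics.isBigO_of_le _ fun x => by
        rw [norm_pow, norm_pow]
        gcongr
        exact abs_max_le_max_abs_abs.trans (by simp)
    simpa using hle.trans_isLittleO (Asymptotics.isLittleO_pow_id one_lt_two)
  · refine ((hasDerivAt_pow 2 s).congr_of_eventuallyEq ?_).congr_deriv ?_
    · filter_upwards [Ioi_mem_nhds hs] with x hx
      rw [max_eq_left (mem_Ioi.1 hx).le]
    · simp [max_eq_left hs.le]

namespace IsPeriodicLienard

variable {T : ℝ} {h : ℝ → ℝ} {f : ℝ → ℝ → ℝ} {u v : ℝ → ℝ}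

lemma congr {h' : ℝ → ℝ} {f' : ℝ → ℝ → ℝ} (hs : IsPeriodicLienard T h f u v)
    (hh : ∀ t ∈ Icc 0 T, h (u t) = h' (u t)) (hf : ∀ t ∈ Icc 0 T, f t (u t) = f' t (u t)) :
    IsPeriodicLienard T h' f' u v where
  hasDerivWithinAt_fst := hs.hasDerivWithinAt_fst
  hasDerivWithinAt_snd t ht := hh t ht ▸ hf t ht ▸ hs.hasDerivWithinAt_snd t ht
  fst_periodic := hs.fst_periodic
  snd_periodic := hs.snd_periodic

lemma continuousOn_fst (hs : IsPeriodicLienard T h f u v) : ContinuousOn u (Icc 0 T) :=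
  fun t ht => (hs.hasDerivWithinAt_fst t ht).continuousWithinAt

lemma hasDerivAt_fst (hs : IsPeriodicLienard T h f u v) {t : ℝ} (ht : t ∈ Ioo 0 T) :
    HasDerivAt u (v t) t :=
  (hs.hasDerivWithinAt_fst t (Ioo_subset_Icc_self ht)).hasDerivAt (Icc_mem_nhds ht.1 ht.2)

lemma exists_sub_eq_mul (hs : IsPeriodicLienard T h f u v) {a b : ℝ} (ha : a ∈ Icc 0 T)
    (hb : b ∈ Icc 0 T) : ∃ ξ ∈ uIcc a b, u b - u a = v ξ * (b - a) := by
  wlog hab : a ≤ b generalizing a b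
  · obtain ⟨ξ, hξ, heq⟩ := this hb ha (le_of_not_ge hab)
    exact ⟨ξ, uIcc_comm a b ▸ hξ, by linarith⟩
  rcases hab.eq_or_lt with rfl | hab
  · exact ⟨a, left_mem_uIcc, by simp⟩
  obtain ⟨ξ, hξ, heq⟩ := exists_hasDerivAt_eq_slope u v hab
    (hs.continuousOn_fst.mono (Icc_subset_Icc ha.1 hb.2))
    fun y hy => hs.hasDerivAt_fst ⟨ha.1.trans_lt hy.1, hy.2.trans_le hb.2⟩
  rw [uIcc_of_le hab.le]
  exact ⟨ξ, Ioo_subset_Icc_self hξ, by rw [heq, div_mul_cancel₀ _ (sub_pos.2 hab).ne']⟩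

/-- Multiplying the equation by `φ(u)` turns the damping term into an exact derivative. -/
lemma hasDerivWithinAt_test (hs : IsPeriodicLienard T h f u v) (hh : Continuous h) {φ φ' : ℝ → ℝ}
    (hφ : ∀ s, HasDerivAt φ (φ' s) s) {t : ℝ} (ht : t ∈ Icc 0 T) :
    HasDerivWithinAt (fun t => v t * φ (u t) + ∫ s in 0..u t, h s * φ s)
      (v t * (v t * φ' (u t)) - f t (u t) * φ (u t)) (Icc 0 T) t := by
  have hu := hs.hasDerivWithinAt_fst t ht
  have hhφ : Continuous fun s => h s * φ s :=
    hh.mul (continuous_iff_continuousAt.2 fun s => (hφ s).continuousAt)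
  have hprim : HasDerivAt (fun x => ∫ s in 0..x, h s * φ s) (h (u t) * φ (u t)) (u t) :=
    (hhφ.integral_hasStrictDerivAt 0 (u t)).hasDerivAt
  exact (((hs.hasDerivWithinAt_snd t ht).mul ((hφ (u t)).comp_hasDerivWithinAt t hu)).add
    (hprim.comp_hasDerivWithinAt t hu)).congr_deriv (by simp only [Function.comp_apply]; ring)

lemma integral_eq_zero (hs : IsPeriodicLienard T h f u v) (hT : 0 ≤ T) (hh : Continuous h)
    (hf : ContinuousOn (fun t => f t (u t)) (Icc 0 T)) : ∫ t in 0..T, f t (u t) = 0 := by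
  have hW := fun t (ht : t ∈ Icc 0 T) =>
    hs.hasDerivWithinAt_test hh (fun s => hasDerivAt_const s (1 : ℝ)) ht
  have hint := intervalIntegral.integral_eq_sub_of_hasDerivAt_of_le hT
    (fun t ht => (hW t ht).continuousWithinAt)
    (fun t ht => (hW t (Ioo_subset_Icc_self ht)).hasDerivAt (Icc_mem_nhds ht.1 ht.2))
    (ContinuousOn.intervalIntegrable_of_Icc hT (hf.neg.congr fun t _ => by simp))
  simpa [hs.fst_periodic, hs.snd_periodic] using hint

lemma mul_test_eq_zero (hs : IsPeriodicLienard T h f u v) (hT : 0 < T) (hh : Continuous h)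
    {φ φ' : ℝ → ℝ} (hφ : ∀ s, HasDerivAt φ (φ' s) s) (hφ' : ∀ s, 0 ≤ φ' s)
    (hfφ : ∀ t ∈ Icc 0 T, f t (u t) * φ (u t) ≤ 0) {t : ℝ} (ht : t ∈ Icc 0 T) :
    f t (u t) * φ (u t) = 0 ∧ v t * φ' (u t) = 0 := by
  have hsq : ∀ t, 0 ≤ v t * (v t * φ' (u t)) := fun t => by
    rw [← mul_assoc]
    exact mul_nonneg (mul_self_nonneg _) (hφ' _)
  have hzero := deriv_eq_zero_of_nonneg_of_periodic hT
    (fun t ht => hs.hasDerivWithinAt_test hh hφ ht)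
    (fun t ht => by linarith [hsq t, hfφ t ht]) (by rw [hs.fst_periodic, hs.snd_periodic]) t ht
  have hv : v t * (v t * φ' (u t)) = 0 := by linarith [hsq t, hfφ t ht]
  refine ⟨by linarith, ?_⟩
  rcases mul_eq_zero.1 hv with h0 | h0
  · rw [h0, zero_mul]
  · exact h0

theorem fst_nonneg (hs : IsPeriodicLienard T h f u v) (hT : 0 < T) (hh : Continuous h)
    (hf : ∀ t ∈ Icc 0 T, ∀ s < 0, 0 < f t s) {t : ℝ} (ht : t ∈ Icc 0 T) : 0 ≤ u t := by
  have hφ : ∀ s, HasDerivAt (fun s : ℝ => -(max (-s) 0) ^ 2) (2 * max (-s) 0) s := fun s =>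
    ((hasDerivAt_sq_max_zero (-s)).comp s (hasDerivAt_neg s)).neg.congr_deriv (by ring)
  have hfφ : ∀ t ∈ Icc 0 T, f t (u t) * -(max (-u t) 0) ^ 2 ≤ 0 := fun t ht => by
    rcases lt_or_ge (u t) 0 with hu | hu
    · exact mul_nonpos_of_nonneg_of_nonpos (hf t ht _ hu).le (neg_nonpos.2 (sq_nonneg _))
    · simp [hu]
  by_contra! hu
  have hzero := (hs.mul_test_eq_zero hT hh hφ (fun s => by positivity) hfφ ht).1
  rw [max_eq_left (neg_pos.2 hu).le, neg_sq] at hzero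
  exact (mul_neg_of_pos_of_neg (hf t ht _ hu) (neg_lt_zero.2 (sq_pos_of_neg hu))).ne hzero

theorem exists_mem_forall_fst_le (hs : IsPeriodicLienard T h f u v) (hT : 0 < T) (hh : Continuous h)
    {S : Set ℝ} (hS : IsClosed S) (hne : (S ∩ Icc 0 T).Nonempty)
    (hf : ∀ t ∈ Icc 0 T, t ∉ S → f t (u t) ≤ 0) :
    ∃ s ∈ S ∩ Icc 0 T, ∀ t ∈ Icc 0 T, u t ≤ u s := by
  obtain ⟨s, hsS, hmax⟩ := (isCompact_Icc.inter_left hS).exists_isMaxOn hne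
    (hs.continuousOn_fst.mono inter_subset_right)
  refine ⟨s, hsS, ?_⟩
  have hφ : ∀ x, HasDerivAt (fun x => (max (x - u s) 0) ^ 2) (2 * max (x - u s) 0) x := fun x =>
    (hasDerivAt_sq_max_zero (x - u s)).comp_sub_const x (u s)
  have hfφ : ∀ t ∈ Icc 0 T, f t (u t) * (max (u t - u s) 0) ^ 2 ≤ 0 := fun t ht => by
    by_cases htS : t ∈ S
    · have : u t ≤ u s := hmax ⟨htS, ht⟩
      simp [this]
    · exact mul_nonpos_of_nonpos_of_nonneg (hf t ht htS) (sq_nonneg _)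
  have hderiv : ∀ t ∈ Icc 0 T,
      HasDerivWithinAt (fun t => (max (u t - u s) 0) ^ 2) 0 (Icc 0 T) t := fun t ht => by
    refine ((hφ (u t)).comp_hasDerivWithinAt t (hs.hasDerivWithinAt_fst t ht)).congr_deriv ?_
    rw [mul_comm]
    exact (hs.mul_test_eq_zero hT hh hφ (fun x => by positivity) hfφ ht).2
  intro t ht
  have hconst := (convex_Icc 0 T).norm_image_sub_le_of_norm_hasDerivWithin_le hderiv
    (fun _ _ => norm_zero.le) hsS.2 ht
  simpa using hconst

end IsPeriodicLienard

/-- `E` integrates the damping term, so that the flux `E u'` has derivative `-E f(t, u)`, and it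
takes values in `[D⁻¹, D]`. -/
structure IsIntegratingFactor (T D : ℝ) (f : ℝ → ℝ → ℝ) (u v E : ℝ → ℝ) : Prop where
  mem_Icc : ∀ t ∈ Icc 0 T, E t ∈ Icc D⁻¹ D
  hasDerivWithinAt_mul : ∀ t ∈ Icc 0 T,
    HasDerivWithinAt (fun t => E t * v t) (-(E t * f t (u t))) (Icc 0 T) t

theorem IsPeriodicLienard.exists_isIntegratingFactor {T C : ℝ} {h : ℝ → ℝ} {f : ℝ → ℝ → ℝ}
    {u v : ℝ → ℝ} (hs : IsPeriodicLienard T h f u v) (hT : 0 ≤ T) (hh : Continuous h)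
    (hC : ∀ s, |h s| ≤ C) : ∃ E, IsIntegratingFactor T (Real.exp (C * T)) f u v E := by
  let w : ℝ → ℝ := fun t => h (IccExtend hT ((Icc 0 T).domRestrict u) t)
  have hw : Continuous w := hh.comp hs.continuousOn_fst.domRestrict.Icc_extend'
  have hwu : ∀ t ∈ Icc 0 T, w t = h (u t) := fun t ht => by
    simp only [w, IccExtend_of_mem hT _ ht, domRestrict_apply]
  refine ⟨fun t => Real.exp (∫ s in 0..t, w s), fun t ht => ?_, fun t ht => ?_⟩
  · have hint : |∫ s in 0..t, w s| ≤ C * T := by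
      have := intervalIntegral.norm_integral_le_of_norm_le_const (a := 0) (b := t) (f := w)
        fun s _ => hC _
      rw [Real.norm_eq_abs, sub_zero, abs_of_nonneg ht.1] at this
      exact this.trans (mul_le_mul_of_nonneg_left ht.2 ((abs_nonneg _).trans (hC 0)))
    rw [← Real.exp_neg]
    exact ⟨Real.exp_le_exp.2 (abs_le.1 hint).1, Real.exp_le_exp.2 (abs_le.1 hint).2⟩
  · have hE := (hw.integral_hasStrictDerivAt 0 t).hasDerivAt.exp.hasDerivWithinAt (s := Icc 0 T)
    exact (hE.mul (hs.hasDerivWithinAt_snd t ht)).congr_deriv (by rw [hwu t ht]; ring)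

namespace IsIntegratingFactor

variable {T D : ℝ} {h : ℝ → ℝ} {f : ℝ → ℝ → ℝ} {u v E : ℝ → ℝ}

lemma pos (hD : 0 < D) (hE : IsIntegratingFactor T D f u v E) {t : ℝ} (ht : t ∈ Icc 0 T) :
    0 < E t :=
  (inv_pos.2 hD).trans_le (hE.mem_Icc t ht).1

lemma continuousOn_mul (hE : IsIntegratingFactor T D f u v E) :
    ContinuousOn (fun t => E t * v t) (Icc 0 T) :=
  fun t ht => (hE.hasDerivWithinAt_mul t ht).continuousWithinAt

theorem abs_snd_le (hE : IsIntegratingFactor T D f u v E) (hD : 0 < D) (hT : 0 < T)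
    (hs : IsPeriodicLienard T h f u v) {B : ℝ} (hB : ∀ t ∈ Icc 0 T, |f t (u t)| ≤ B) {t : ℝ}
    (ht : t ∈ Icc 0 T) : |v t| ≤ D ^ 2 * B * T := by
  obtain ⟨ξ, hξ, hvξ⟩ : ∃ ξ ∈ Ioo 0 T, v ξ = 0 :=
    exists_hasDerivAt_eq_zero hT hs.continuousOn_fst hs.fst_periodic
      fun x hx => hs.hasDerivAt_fst hx
  have hB₀ : 0 ≤ B := (abs_nonneg _).trans (hB t ht)
  have hflux := (convex_Icc 0 T).norm_image_sub_le_of_norm_hasDerivWithin_le (C := D * B)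
    hE.hasDerivWithinAt_mul (fun x hx => ?_) (Ioo_subset_Icc_self hξ) ht
  · rw [hvξ, mul_zero, sub_zero, Real.norm_eq_abs, Real.norm_eq_abs, abs_mul,
      abs_of_pos (hE.pos hD ht)] at hflux
    have htξ : |t - ξ| ≤ T := abs_le.2 ⟨by linarith [ht.1, hξ.2], by linarith [ht.2, hξ.1]⟩
    calc |v t| = D * (D⁻¹ * |v t|) := by field_simp
      _ ≤ D * (D * B * T) := by grw [(hE.mem_Icc t ht).1, hflux, htξ]
      _ = D ^ 2 * B * T := by ring
  · rw [norm_neg, norm_mul, Real.norm_of_nonneg (hE.pos hD hx).le, Real.norm_eq_abs]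
    grw [(hE.mem_Icc x hx).2, hB x hx]

section Hump

variable {σ τ ε : ℝ}

lemma antitoneOn_flux (hE : IsIntegratingFactor T D f u v E) (hD : 0 < D) (hσ : 0 ≤ σ)
    (hτ : τ ≤ T) (hf : ∀ t ∈ Icc σ τ, 0 ≤ f t (u t)) :
    AntitoneOn (fun t => E t * v t) (Icc σ τ) := by
  have hsub : Icc σ τ ⊆ Icc 0 T := Icc_subset_Icc hσ hτ
  exact antitoneOn_of_hasDerivWithinAt_nonpos (convex_Icc σ τ) (hE.continuousOn_mul.mono hsub)
    (fun t ht => (hE.hasDerivWithinAt_mul t (hsub (interior_subset ht))).mono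
      (interior_subset.trans hsub))
    fun t ht => neg_nonpos.2 <| mul_nonneg (hE.pos hD (hsub (interior_subset ht))).le
      (hf t (interior_subset ht))

/-- Where `f(t, u) ≥ 0` the flux decreases, so that `u` lies below its tangents up to the
oscillation of the integrating factor. -/
theorem exists_sub_le_mul (hE : IsIntegratingFactor T D f u v E) (hD : 0 < D)
    (hs : IsPeriodicLienard T h f u v) (hσ : 0 ≤ σ) (hτ : τ ≤ T)
    (hf : ∀ t ∈ Icc σ τ, 0 ≤ f t (u t)) {x t : ℝ} (hx : x ∈ Icc σ τ) (ht : t ∈ Icc σ τ) :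
    ∃ e ∈ Icc D⁻¹ D, u x - u t ≤ e * (E t * v t * (x - t)) := by
  have hsub : Icc σ τ ⊆ Icc 0 T := Icc_subset_Icc hσ hτ
  obtain ⟨ξ, hξ, hmvt⟩ := hs.exists_sub_eq_mul (hsub ht) (hsub hx)
  have hξ' : ξ ∈ Icc σ τ := ordConnected_Icc.uIcc_subset ht hx hξ
  have hEξ : 0 < E ξ := hE.pos hD (hsub hξ')
  have hflux : E ξ * v ξ * (x - t) ≤ E t * v t * (x - t) := by
    have hanti := hE.antitoneOn_flux hD hσ hτ hf
    rcases le_total t x with htx | hxt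
    · rw [uIcc_of_le htx] at hξ
      exact mul_le_mul_of_nonneg_right (hanti ht hξ' hξ.1) (sub_nonneg.2 htx)
    · rw [uIcc_of_ge hxt] at hξ
      exact mul_le_mul_of_nonpos_right (hanti hξ' ht hξ.2) (sub_nonpos.2 hxt)
  refine ⟨(E ξ)⁻¹, ⟨inv_anti₀ hEξ (hE.mem_Icc ξ (hsub hξ')).2,
    inv_le_of_inv_le₀ hD (hE.mem_Icc ξ (hsub hξ')).1⟩, ?_⟩
  rw [hmvt, le_inv_mul_iff₀ hEξ, ← mul_assoc]
  exact hflux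

lemma abs_flux_le (hE : IsIntegratingFactor T D f u v E) (hD : 0 < D)
    (hs : IsPeriodicLienard T h f u v) (hσ : 0 ≤ σ) (hτ : τ ≤ T)
    (hf : ∀ t ∈ Icc σ τ, 0 ≤ f t (u t)) (hu : ∀ t ∈ Icc σ τ, 0 ≤ u t) (hε : 0 < ε) {t : ℝ}
    (ht : t ∈ Icc (σ + ε) (τ - ε)) : |E t * v t| ≤ D * u t / ε := by
  have hστ : σ ≤ τ := by linarith [ht.1, ht.2]
  have ht' : t ∈ Icc σ τ := ⟨by linarith [ht.1], by linarith [ht.2]⟩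
  have key : ∀ x ∈ Icc σ τ, E t * v t * (x - t) ≤ -(|E t * v t| * ε) →
      |E t * v t| ≤ D * u t / ε := fun x hx hq => by
    obtain ⟨e, he, hle⟩ := hE.exists_sub_le_mul hD hs hσ hτ hf hx ht'
    have he₀ : 0 ≤ e := (inv_pos.2 hD).le.trans he.1
    have : D⁻¹ * (|E t * v t| * ε) ≤ e * -(E t * v t * (x - t)) :=
      mul_le_mul he.1 (by linarith) (by positivity) he₀
    rw [le_div_iff₀ hε, ← inv_mul_le_iff₀ hD]
    linarith [hu x hx]
  rcases le_total 0 (E t * v t) with hq | hq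
  · refine key σ ⟨le_rfl, hστ⟩ ?_
    rw [abs_of_nonneg hq]
    nlinarith [ht.1]
  · refine key τ ⟨hστ, le_rfl⟩ ?_
    rw [abs_of_nonpos hq]
    nlinarith [ht.2]

theorem harnack (hE : IsIntegratingFactor T D f u v E) (hD : 0 < D)
    (hs : IsPeriodicLienard T h f u v) (hσ : 0 ≤ σ) (hτ : τ ≤ T)
    (hf : ∀ t ∈ Icc σ τ, 0 ≤ f t (u t)) (hu : ∀ t ∈ Icc σ τ, 0 ≤ u t) (hε : 0 < ε) {x t : ℝ}
    (hx : x ∈ Icc σ τ) (ht : t ∈ Icc (σ + ε) (τ - ε)) : u x ≤ (1 + D ^ 2 * T / ε) * u t := by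
  have ht' : t ∈ Icc σ τ := ⟨by linarith [ht.1], by linarith [ht.2]⟩
  obtain ⟨e, he, hle⟩ := hE.exists_sub_le_mul hD hs hσ hτ hf hx ht'
  have hxt : |x - t| ≤ T :=
    abs_le.2 ⟨by linarith [ht'.2, hx.1], by linarith [ht'.1, hx.2]⟩
  have hut := hu t ht'
  have : u x - u t ≤ D * (D * u t / ε * T) := calc
    u x - u t ≤ e * |E t * v t * (x - t)| := hle.trans <|
      mul_le_mul_of_nonneg_left (le_abs_self _) ((inv_pos.2 hD).le.trans he.1)
    _ ≤ D * (D * u t / ε * T) := by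
      grw [abs_mul, he.2, hE.abs_flux_le hD hs hσ hτ hf hu hε ht, hxt]
  linarith [show (1 + D ^ 2 * T / ε) * u t = u t + D * (D * u t / ε * T) by ring]

theorem mul_length_le (hE : IsIntegratingFactor T D f u v E) (hD : 0 < D)
    (hs : IsPeriodicLienard T h f u v) (hσ : 0 ≤ σ) (hτ : τ ≤ T)
    (hf : ∀ t ∈ Icc σ τ, 0 ≤ f t (u t)) (hu : ∀ t ∈ Icc σ τ, 0 ≤ u t) (hε : 0 < ε)
    {c d m M : ℝ} (hc : σ + ε ≤ c) (hcd : c ≤ d) (hd : d ≤ τ - ε) (hm : 0 ≤ m)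
    (hfm : ∀ t ∈ Icc c d, m ≤ f t (u t)) (huM : ∀ t ∈ Icc c d, u t ≤ M) :
    m * (d - c) ≤ 2 * D ^ 2 * M / ε := by
  have hsub : Icc c d ⊆ Icc 0 T := Icc_subset_Icc (by linarith) (by linarith)
  have hmono : MonotoneOn (fun t => -(D⁻¹ * m * t) - E t * v t) (Icc c d) := by
    refine monotoneOn_of_hasDerivWithinAt_nonneg (convex_Icc c d)
      (f' := fun t => -(D⁻¹ * m) + E t * f t (u t))
      ((by fun_prop : Continuous fun t => -(D⁻¹ * m * t)).continuousOn.sub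
        (hE.continuousOn_mul.mono hsub)) (fun t ht => ?_) fun t ht => ?_
    · have := (hE.hasDerivWithinAt_mul t (hsub (interior_subset ht))).mono
        (interior_subset.trans hsub)
      exact (((hasDerivWithinAt_id t _).const_mul (D⁻¹ * m)).neg.sub this).congr_deriv (by ring)
    · have ht := interior_subset ht
      have := mul_le_mul (hE.mem_Icc t (hsub ht)).1 (hfm t ht) hm (hE.pos hD (hsub ht)).le
      linarith
  have hdrop := hmono (left_mem_Icc.2 hcd) (right_mem_Icc.2 hcd) hcd
  have hflux : ∀ t ∈ Icc c d, |E t * v t| ≤ D * M / ε := fun t ht => by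
    grw [hE.abs_flux_le hD hs hσ hτ hf hu hε ⟨hc.trans ht.1, ht.2.trans hd⟩, huM t ht]
  have hqc := abs_le.1 (hflux c (left_mem_Icc.2 hcd))
  have hqd := abs_le.1 (hflux d (right_mem_Icc.2 hcd))
  have : D⁻¹ * (m * (d - c)) ≤ 2 * (D * M / ε) := by linarith
  rw [inv_mul_le_iff₀ hD] at this
  exact this.trans_eq (by ring)

end Hump

end IsIntegratingFactor

end Lienard

section SmallSolutions

theorem IsPeriodicLienard.abs_fst_sub_le {T C B : ℝ} {h : ℝ → ℝ} {f : ℝ → ℝ → ℝ} {u v : ℝ → ℝ}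
    (hs : IsPeriodicLienard T h f u v) (hT : 0 < T) (hh : Continuous h) (hC : ∀ s, |h s| ≤ C)
    (hB : ∀ t ∈ Icc 0 T, |f t (u t)| ≤ B) {x t : ℝ} (hx : x ∈ Icc 0 T) (ht : t ∈ Icc 0 T) :
    |u t - u x| ≤ Real.exp (C * T) ^ 2 * T ^ 2 * B := by
  obtain ⟨E, hE⟩ := hs.exists_isIntegratingFactor hT.le hh hC
  obtain ⟨ξ, hξ, hmvt⟩ := hs.exists_sub_eq_mul hx ht
  have hB₀ : 0 ≤ B := (abs_nonneg _).trans (hB t ht)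
  have htx : |t - x| ≤ T := abs_le.2 ⟨by linarith [ht.1, hx.2], by linarith [ht.2, hx.1]⟩
  have hv := hE.abs_snd_le (Real.exp_pos _) hT hs hB (ordConnected_Icc.uIcc_subset hx ht hξ)
  rw [hmvt, abs_mul]
  grw [hv, htx]
  exact le_of_eq (by ring)

lemma integral_mul_le_of_abs_sub_le {T : ℝ} (hT : 0 ≤ T) {b φ : ℝ → ℝ}
    (hb : ContinuousOn b (Icc 0 T)) (hφ : ContinuousOn φ (Icc 0 T)) {B k e : ℝ}
    (hbB : ∀ t ∈ Icc 0 T, |b t| ≤ B) (hφk : ∀ t ∈ Icc 0 T, |φ t - k| ≤ e) :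
    ∫ t in 0..T, b t * φ t ≤ (∫ t in 0..T, b t) * k + T * (B * e) := by
  have hbk : ContinuousOn (fun t => b t * k) (Icc 0 T) := hb.mul continuousOn_const
  calc ∫ t in 0..T, b t * φ t ≤ ∫ t in 0..T, (b t * k + B * e) := by
        refine intervalIntegral.integral_mono_on hT
          ((hb.mul hφ).intervalIntegrable_of_Icc hT)
          ((hbk.add continuousOn_const).intervalIntegrable_of_Icc hT) fun t ht => ?_
        have hbφ : b t * (φ t - k) ≤ B * e := by
          refine (le_abs_self _).trans ?_
          have := (abs_nonneg _).trans (hbB t ht)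
          rw [abs_mul]
          grw [hbB t ht, hφk t ht]
        linarith
    _ = (∫ t in 0..T, b t) * k + T * (B * e) := by
        rw [intervalIntegral.integral_add (hbk.intervalIntegrable_of_Icc hT)
          intervalIntegrable_const, intervalIntegral.integral_mul_const,
          intervalIntegral.integral_const, smul_eq_mul, sub_zero]

/-- Combines smallness, which makes small solutions nearly constant relative to their size, with
regular oscillation, which transfers near-constancy from `u` to `G(u)`. -/
lemma RegOscAtZero.exists_abs_sub_le {G : ℝ → ℝ} (hG₀ : G 0 = 0) (hGpos : ∀ s > 0, 0 < G s)
    (hGlim : Tendsto (fun s => G s / s) (𝓝[>] 0) (𝓝 0)) (hGosc : RegOscAtZero G) {ε R : ℝ}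
    (hε : 0 < ε) (hR : 0 < R) :
    ∃ δ > 0, ∀ M ∈ Ioc 0 δ, ∃ κ, (∀ s ∈ Icc 0 M, G s ≤ κ) ∧
      ∀ s, |s - M| ≤ R * κ → |G s - G M| ≤ ε * G M := by
  obtain ⟨δ₁, hδ₁, η, hη, hosc⟩ := hGosc ε hε
  have hηR : 0 < η / (2 * R) := by positivity
  obtain ⟨δ₂, hδ₂, hsmall⟩ := mem_nhdsGT_iff_exists_Ioc_subset.1 (hGlim.eventually_lt_const hηR)
  refine ⟨min (δ₁ / 2) δ₂, lt_min (half_pos hδ₁) hδ₂, fun M hM => ⟨η / (2 * R) * M, ?_, ?_⟩⟩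
  · rintro s ⟨hs₀, hsM⟩
    rcases hs₀.eq_or_lt with rfl | hs₀
    · rw [hG₀]
      exact mul_nonneg hηR.le hM.1.le
    · have hlt : G s / s < η / (2 * R) :=
        hsmall ⟨hs₀, hsM.trans (hM.2.trans (min_le_right _ _))⟩
      rw [div_lt_iff₀ hs₀] at hlt
      exact hlt.le.trans (mul_le_mul_of_nonneg_left hsM hηR.le)
  · intro s hs
    have hω : |s / M - 1| < η := by
      rw [div_sub_one hM.1.ne', abs_div, abs_of_pos hM.1, div_lt_iff₀ hM.1]
      calc |s - M| ≤ R * (η / (2 * R) * M) := hs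
        _ = η * M / 2 := by field_simp
        _ < η * M := half_lt_self (mul_pos hη hM.1)
    have hlt := hosc M (s / M) hM.1 (by linarith [hM.2.trans (min_le_left _ _)]) hω
    rw [div_mul_cancel₀ _ hM.1.ne', div_sub_one (hGpos M hM.1).ne', abs_div,
      abs_of_pos (hGpos M hM.1), div_lt_iff₀ (hGpos M hM.1)] at hlt
    exact hlt.le

theorem exists_lt_of_integral_le_neg {T C B c : ℝ} (hT : 0 < T) (hB : 0 < B) (hc : 0 < c)
    {G : ℝ → ℝ} (hGc : Continuous G) (hG₀ : G 0 = 0) (hGpos : ∀ s > 0, 0 < G s)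
    (hGlim : Tendsto (fun s => G s / s) (𝓝[>] 0) (𝓝 0)) (hGosc : RegOscAtZero G) :
    ∃ δ > 0, ∀ h b u v : ℝ → ℝ, Continuous h → (∀ s, |h s| ≤ C) → ContinuousOn b (Icc 0 T) →
      (∀ t ∈ Icc 0 T, |b t| ≤ B) → ∫ t in 0..T, b t ≤ -c →
      IsPeriodicLienard T h (fun t s => b t * G s) u v →
      (∀ t ∈ Icc 0 T, 0 ≤ u t) → (∃ t ∈ Icc 0 T, 0 < u t) → ∃ t ∈ Icc 0 T, δ < u t := by
  obtain ⟨δ, hδ, hsmall⟩ := RegOscAtZero.exists_abs_sub_le hG₀ hGpos hGlim hGosc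
    (ε := c / (2 * T * B)) (R := Real.exp (C * T) ^ 2 * T ^ 2 * B) (by positivity) (by positivity)
  refine ⟨δ, hδ, fun h b u v hh hC hb hbB hbc hs hu hex => ?_⟩
  by_contra! huδ
  obtain ⟨x, hx, hmax⟩ := isCompact_Icc.exists_isMaxOn ⟨0, left_mem_Icc.2 hT.le⟩ hs.continuousOn_fst
  have hM : u x ∈ Ioc 0 δ := by
    obtain ⟨t, ht, hut⟩ := hex
    exact ⟨hut.trans_le (hmax ht), huδ x hx⟩
  obtain ⟨κ, hκ, hclose⟩ := hsmall (u x) hM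
  have hforce : ∀ t ∈ Icc 0 T, |b t * G (u t)| ≤ B * κ := fun t ht => by
    have hGnonneg : 0 ≤ G (u t) := (hu t ht).eq_or_lt.elim (fun h0 => by rw [← h0, hG₀])
      fun h0 => (hGpos _ h0).le
    rw [abs_mul, abs_of_nonneg hGnonneg]
    grw [hbB t ht, hκ (u t) ⟨hu t ht, hmax ht⟩]
  have hGclose : ∀ t ∈ Icc 0 T, |G (u t) - G (u x)| ≤ c / (2 * T * B) * G (u x) := fun t ht =>
    hclose _ ((hs.abs_fst_sub_le hT hh hC hforce hx ht).trans_eq (by ring))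
  have hGu : ContinuousOn (fun t => G (u t)) (Icc 0 T) := hGc.comp_continuousOn hs.continuousOn_fst
  have hint := integral_mul_le_of_abs_sub_le hT.le hb hGu hbB hGclose
  rw [hs.integral_eq_zero hT.le hh (hb.mul hGu)] at hint
  have hGx := hGpos _ hM.1
  have hsimp : T * (B * (c / (2 * T * B) * G (u x))) = c * G (u x) / 2 := by field_simp
  nlinarith [mul_pos hc hGx]

end SmallSolutions

section Fields

lemma IsPeriodicSolution.norm_le_mul_exp {E : Type*} [NormedAddCommGroup E] [NormedSpace ℝ E]
    {T K : ℝ} {f : ℝ → E → E} {Z : ℝ → E} (hZ : IsPeriodicSolution T f Z)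
    (hf : ∀ t z, ‖f t z‖ ≤ K * ‖z‖) {s t : ℝ} (hs : 0 ≤ s) (hst : s ≤ t) (ht : t ≤ T) :
    ‖Z t‖ ≤ ‖Z s‖ * Real.exp (K * (t - s)) := by
  rw [← gronwallBound_ε0]
  refine norm_le_gronwallBound_of_norm_deriv_right_le (b := T)
    (fun x hx => ((hZ.1 x ⟨hs.trans hx.1, hx.2⟩).continuousWithinAt.mono (Icc_subset_Icc_left hs)))
    (fun x hx => (hZ.1 x ⟨hs.trans hx.1, hx.2.le⟩).mono_of_mem_nhdsWithin
      (Icc_mem_nhdsGE_of_mem ⟨hs.trans hx.1, hx.2⟩)) le_rfl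
    (fun x _ => by simpa only [add_zero] using hf x (Z x)) t ⟨hst, ht⟩

lemma IsPeriodicSolution.apply_zero_eq_zero {E : Type*} [NormedAddCommGroup E] [NormedSpace ℝ E]
    {T K : ℝ} {f : ℝ → E → E} {Z : ℝ → E} (hZ : IsPeriodicSolution T f Z)
    (hf : ∀ t z, ‖f t z‖ ≤ K * ‖z‖) {t : ℝ} (ht : t ∈ Icc 0 T) (hZt : Z t = 0) : Z 0 = 0 := by
  have hle := hZ.norm_le_mul_exp hf ht.1 ht.2 le_rfl
  rw [hZt, norm_zero, zero_mul] at hle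
  rw [hZ.2]
  exact norm_le_zero_iff.1 hle

lemma IsPeriodicLienard.snd_eq_zero_of_isMinOn {T : ℝ} {h : ℝ → ℝ} {f : ℝ → ℝ → ℝ} {u v : ℝ → ℝ}
    (hs : IsPeriodicLienard T h f u v) (hT : 0 < T) {t : ℝ} (ht : t ∈ Icc 0 T)
    (hmin : IsMinOn u (Icc 0 T) t) : v t = 0 := by
  have hdir : ∀ x ∈ Icc 0 T, IsMinOn u (Icc 0 T) x → ∀ y ∈ Icc 0 T, 0 ≤ (y - x) * v x :=
    fun x hx hxmin y hy => by
      simpa using hxmin.localize.hasFDerivWithinAt_nonneg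
        (hs.hasDerivWithinAt_fst x hx).hasFDerivWithinAt
        (sub_mem_posTangentConeAt_of_segment_subset ((convex_Icc 0 T).segment_subset hx hy))
  have h0 : (0 : ℝ) ∈ Icc 0 T := left_mem_Icc.2 hT.le
  have hTT : T ∈ Icc 0 T := right_mem_Icc.2 hT.le
  have hend : IsMinOn u (Icc 0 T) 0 → v 0 = 0 := fun hmin₀ => by
    have hminT : IsMinOn u (Icc 0 T) T := fun x hx => hs.fst_periodic ▸ hmin₀ hx
    have hvT := hdir T hTT hminT 0 h0
    rw [← hs.snd_periodic] at hvT
    exact le_antisymm (by nlinarith) (by nlinarith [hdir 0 h0 hmin₀ T hTT])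
  rcases ht.1.eq_or_lt with rfl | ht₀
  · exact hend hmin
  rcases ht.2.eq_or_lt with rfl | htT
  · rw [← hs.snd_periodic]
    exact hend fun x hx => hs.fst_periodic ▸ hmin hx
  · exact le_antisymm (by nlinarith [hdir t ht hmin 0 h0]) (by nlinarith [hdir t ht hmin T hTT])

/-- The planar vector field on `ℂ = {u + v i}` of the system `u' = v`,
`v' = -h(u) v - f(t, u)`. -/
def lienardField (h : ℝ → ℝ) (f : ℝ → ℝ → ℝ) (t : ℝ) (z : ℂ) : ℂ :=
  ⟨z.im, -(h z.re * z.im) - f t z.re⟩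

lemma IsPeriodicSolution.isPeriodicLienard {T : ℝ} {h : ℝ → ℝ} {f : ℝ → ℝ → ℝ} {Z : ℝ → ℂ}
    (hZ : IsPeriodicSolution T (lienardField h f) Z) :
    IsPeriodicLienard T h f (fun t => (Z t).re) fun t => (Z t).im where
  hasDerivWithinAt_fst t ht := Complex.reCLM.hasFDerivAt.comp_hasDerivWithinAt t (hZ.1 t ht)
  hasDerivWithinAt_snd t ht := Complex.imCLM.hasFDerivAt.comp_hasDerivWithinAt t (hZ.1 t ht)
  fst_periodic := by rw [hZ.2]
  snd_periodic := by rw [hZ.2]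

lemma norm_lienardField_le {h : ℝ → ℝ} {f : ℝ → ℝ → ℝ} {C A B t : ℝ} {z : ℂ}
    (hC : |h z.re| ≤ C) (hf : |f t z.re| ≤ A * |z.re| + B) (hA : 0 ≤ A) :
    ‖lienardField h f t z‖ ≤ (1 + C + A) * ‖z‖ + B := by
  have hC₀ : 0 ≤ C := (abs_nonneg _).trans hC
  calc ‖lienardField h f t z‖ ≤ |z.im| + |-(h z.re * z.im) - f t z.re| :=
        Complex.norm_le_abs_re_add_abs_im _
    _ ≤ |z.im| + (|h z.re| * |z.im| + |f t z.re|) := by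
        grw [abs_sub, abs_neg, abs_mul]
    _ ≤ ‖z‖ + (C * ‖z‖ + (A * ‖z‖ + B)) := by
        grw [hf, hC, Complex.abs_im_le_norm, Complex.abs_re_le_norm]
    _ = (1 + C + A) * ‖z‖ + B := by ring

lemma continuous_lienardField {X : Type*} [TopologicalSpace X] {h : X → ℝ → ℝ}
    {f : X → ℝ → ℝ → ℝ} (hh : Continuous ↿h) (hf : Continuous ↿f) :
    Continuous ↿fun x => lienardField (h x) (f x) := by
  have hre : Continuous fun p : X × ℝ × ℂ => p.2.2.re := by fun_prop
  have him : Continuous fun p : X × ℝ × ℂ => p.2.2.im := by fun_prop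
  have hh' : Continuous fun p : X × ℝ × ℂ => h p.1 p.2.2.re :=
    hh.comp (continuous_fst.prodMk hre)
  have hf' : Continuous fun p : X × ℝ × ℂ => f p.1 p.2.1 p.2.2.re :=
    hf.comp (continuous_fst.prodMk ((continuous_fst.comp continuous_snd).prodMk hre))
  exact Complex.equivRealProdCLM.symm.continuous.comp (him.prodMk ((hh'.mul him).neg.sub hf'))

lemma IsPeriodicSolution.eq_zero_or_forall_pos {T : ℝ} (hT : 0 < T) {h : ℝ → ℝ} {f : ℝ → ℝ → ℝ}
    {Z : ℝ → ℂ} (hZ : IsPeriodicSolution T (lienardField h f) Z) (hh : Continuous h)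
    (hneg : ∀ t ∈ Icc 0 T, ∀ s < 0, 0 < f t s) {K : ℝ}
    (hK : ∀ t z, ‖lienardField h f t z‖ ≤ K * ‖z‖) :
    Z 0 = 0 ∨ ∀ t ∈ Icc 0 T, 0 < (Z t).re := by
  refine or_iff_not_imp_left.2 fun hZ₀ t ht => ?_
  have hs := hZ.isPeriodicLienard
  refine (hs.fst_nonneg hT hh hneg ht).lt_of_ne fun hre => hZ₀ (hZ.apply_zero_eq_zero hK ht ?_)
  have hmin : IsMinOn (fun t => (Z t).re) (Icc 0 T) t := fun x hx => by
    simpa only [mem_ofPred_eq, ← hre] using hs.fst_nonneg hT hh hneg hx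
  exact Complex.ext hre.symm (hs.snd_eq_zero_of_isMinOn hT ht hmin)

end Fields

section Forcing

/-- A continuous positive nonlinearity on the half-line, extended by `0` to `s ≤ 0`, whose linear
growth of rate `A` makes the associated vector field sublinear. -/
structure IsNonlinearity (A : ℝ) (G : ℝ → ℝ) : Prop where
  continuous : Continuous G
  eq_zero : ∀ s ≤ 0, G s = 0
  pos : ∀ s > 0, 0 < G s
  le_mul : ∀ s > 0, G s ≤ A * s

namespace IsNonlinearity

variable {A : ℝ} {G : ℝ → ℝ}

lemma nonneg (hG : IsNonlinearity A G) (s : ℝ) : 0 ≤ G s :=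
  (le_or_gt s 0).elim (fun hs => (hG.eq_zero s hs).ge) fun hs => (hG.pos s hs).le

lemma growth_nonneg (hG : IsNonlinearity A G) : 0 ≤ A := by
  linarith [hG.pos 1 one_pos, hG.le_mul 1 one_pos]

lemma abs_le (hG : IsNonlinearity A G) (s : ℝ) : |G s| ≤ A * |s| := by
  rw [abs_of_nonneg (hG.nonneg s)]
  rcases le_or_gt s 0 with hs | hs
  · rw [hG.eq_zero s hs]
    exact mul_nonneg hG.growth_nonneg (abs_nonneg s)
  · rw [abs_of_pos hs]
    exact hG.le_mul s hs

lemma segment_max_zero (hG : IsNonlinearity A G) {r : ℝ} (hr : r ∈ Icc 0 1) :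
    IsNonlinearity (A + 1) fun s => (1 - r) * G s + r * max s 0 where
  continuous := by
    have := hG.continuous
    fun_prop
  eq_zero s hs := by rw [hG.eq_zero s hs, max_eq_right hs, mul_zero, mul_zero, add_zero]
  pos s hs := by
    rw [max_eq_left hs.le]
    rcases hr.1.eq_or_lt with rfl | hr₀
    · simpa using hG.pos s hs
    · exact add_pos_of_nonneg_of_pos (mul_nonneg (sub_nonneg.2 hr.2) (hG.nonneg s))
        (mul_pos hr₀ hs)
  le_mul s hs := by
    rw [max_eq_left hs.le, add_one_mul]
    exact add_le_add ((mul_le_of_le_one_left (hG.nonneg s) (by linarith [hr.1])).trans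
      (hG.le_mul s hs)) (mul_le_of_le_one_left hs.le hr.2)

end IsNonlinearity

/-- The forcing term `b(t) G(s) + l b⁺(t) + s⁻`. The parameter `l` destroys all periodic solutions
when it is large, and `s⁻` forces periodic solutions to be nonnegative. -/
def forcing (b G : ℝ → ℝ) (l t s : ℝ) : ℝ :=
  b t * G s + l * max (b t) 0 + max (-s) 0

lemma forcing_of_nonneg (b G : ℝ → ℝ) (l t : ℝ) {s : ℝ} (hs : 0 ≤ s) :
    forcing b G l t s = b t * G s + l * max (b t) 0 := by
  rw [forcing, max_eq_right (neg_nonpos.2 hs), add_zero]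

lemma forcing_of_nonneg_of_nonneg {b : ℝ → ℝ} (G : ℝ → ℝ) (l : ℝ) {t s : ℝ} (hb : 0 ≤ b t)
    (hs : 0 ≤ s) : forcing b G l t s = b t * (G s + l) := by
  rw [forcing_of_nonneg b G l t hs, max_eq_left hb]
  ring

variable {A B : ℝ} {b G : ℝ → ℝ}

lemma forcing_pos_of_neg (b : ℝ → ℝ) (hG : IsNonlinearity A G) {l : ℝ} (hl : 0 ≤ l) (t : ℝ) {s : ℝ}
    (hs : s < 0) : 0 < forcing b G l t s := by
  have hl' : 0 ≤ l * max (b t) 0 := mul_nonneg hl (le_max_right _ _)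
  rw [forcing, hG.eq_zero s hs.le, max_eq_left (neg_pos.2 hs).le]
  linarith

lemma continuous_forcing {X : Type*} [TopologicalSpace X] {b G : X → ℝ → ℝ} {l : X → ℝ}
    (hb : Continuous ↿b) (hG : Continuous ↿G) (hl : Continuous l) :
    Continuous ↿fun x => forcing (b x) (G x) (l x) := by
  have hb' : Continuous fun p : X × ℝ × ℝ => b p.1 p.2.1 :=
    hb.comp (continuous_fst.prodMk (continuous_fst.comp continuous_snd))
  have hG' : Continuous fun p : X × ℝ × ℝ => G p.1 p.2.2 :=
    hG.comp (continuous_fst.prodMk (continuous_snd.comp continuous_snd))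
  have hl' : Continuous fun p : X × ℝ × ℝ => l p.1 := hl.comp continuous_fst
  exact ((hb'.mul hG').add (hl'.mul (hb'.max continuous_const))).add
    ((continuous_snd.comp continuous_snd).neg.max continuous_const)

lemma abs_forcing_le (hG : IsNonlinearity A G) {l L t : ℝ} (hb : |b t| ≤ B) (hl : l ∈ Icc 0 L)
    (s : ℝ) : |forcing b G l t s| ≤ (B * A + 1) * |s| + L * B := by
  have hB : 0 ≤ B := (abs_nonneg _).trans hb
  have hbB : |max (b t) 0| ≤ B := abs_max_le_max_abs_abs.trans (max_le hb (by rwa [abs_zero]))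
  have hs : |max (-s) 0| ≤ |s| := abs_max_le_max_abs_abs.trans (by simp)
  calc |forcing b G l t s| ≤ |b t| * |G s| + |l| * |max (b t) 0| + |max (-s) 0| := by
        rw [← abs_mul, ← abs_mul]
        exact abs_add_three _ _ _
    _ ≤ B * (A * |s|) + L * B + |s| := by
        rw [abs_of_nonneg hl.1]
        have hl₀ := hl.1
        have : 0 ≤ L := hl.1.trans hl.2
        grw [hb, hG.abs_le s, hbB, hs, hl.2]
    _ = (B * A + 1) * |s| + L * B := by ring

lemma norm_lienardField_forcing_le {h : ℝ → ℝ} {C : ℝ} (hC : ∀ s, |h s| ≤ C)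
    (hG : IsNonlinearity A G) {l L t : ℝ} (hb : |b t| ≤ B) (hl : l ∈ Icc 0 L) (z : ℂ) :
    ‖lienardField h (forcing b G l) t z‖ ≤ (2 + C + B * A) * ‖z‖ + L * B := by
  have hBA : 0 ≤ B * A := mul_nonneg ((abs_nonneg _).trans hb) hG.growth_nonneg
  exact (norm_lienardField_le (hC _) (abs_forcing_le hG hb hl _) (by positivity)).trans_eq (by ring)

lemma norm_lienardField_forcing_le_one_add {h : ℝ → ℝ} {C : ℝ} (hC : ∀ s, |h s| ≤ C)
    (hG : IsNonlinearity A G) {l L t : ℝ} (hb : |b t| ≤ B) (hl : l ∈ Icc 0 L) (z : ℂ) :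
    ‖lienardField h (forcing b G l) t z‖ ≤ (2 + C + B * A + L * B) * (1 + ‖z‖) := by
  have hC₀ : 0 ≤ C := (abs_nonneg _).trans (hC 0)
  have hB₀ : 0 ≤ B := (abs_nonneg _).trans hb
  have hA₀ : 0 ≤ A := hG.growth_nonneg
  have hL₀ : 0 ≤ L := hl.1.trans hl.2
  have : 0 ≤ (2 + C + B * A) + L * B * ‖z‖ := by positivity
  linarith [norm_lienardField_forcing_le hC hG hb hl z]

end Forcing

section Homotopy

variable {T C A B : ℝ} {h b G : ℝ → ℝ}

lemma IsPeriodicSolution.eq_zero_or_isPeriodicLienard (hT : 0 < T) (hh : Continuous h)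
    (hC : ∀ s, |h s| ≤ C) (hG : IsNonlinearity A G) (hB : ∀ t, |b t| ≤ B) {Z : ℝ → ℂ}
    (hZ : IsPeriodicSolution T (lienardField h (forcing b G 0)) Z) :
    Z 0 = 0 ∨ (∀ t ∈ Icc 0 T, 0 < (Z t).re) ∧
      IsPeriodicLienard T h (fun t s => b t * G s) (fun t => (Z t).re) fun t => (Z t).im := by
  have hpos := hZ.eq_zero_or_forall_pos hT hh
    (fun t _ s hs => forcing_pos_of_neg b hG le_rfl t hs) (K := 2 + C + B * A) fun t z => by
      simpa using norm_lienardField_forcing_le hC hG (hB t) (L := 0) ⟨le_rfl, le_rfl⟩ z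
  refine hpos.imp_right fun hpos => ⟨hpos, ?_⟩
  have hs := hZ.isPeriodicLienard
  refine hs.congr (fun _ _ => rfl) fun t ht => ?_
  rw [forcing_of_nonneg b G 0 t (hpos t ht).le, zero_mul, add_zero]

lemma IsPeriodicSolution.apply_zero_eq_zero_of_neg (hT : 0 < T) (hh : Continuous h)
    (hC : ∀ s, |h s| ≤ C) (hG : IsNonlinearity A G) {Z : ℝ → ℂ}
    (hZ : IsPeriodicSolution T (lienardField h (forcing (fun _ => -1) G 0)) Z) : Z 0 = 0 := by
  refine (hZ.eq_zero_or_isPeriodicLienard hT hh hC hG (B := 1) (by simp)).resolve_right ?_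
  rintro ⟨hpos, hs⟩
  have hGc : ContinuousOn (fun t => G (Z t).re) (Icc 0 T) :=
    hG.continuous.comp_continuousOn hs.continuousOn_fst
  have hint : 0 < ∫ t in 0..T, G (Z t).re := intervalIntegral.intervalIntegral_pos_of_pos_on
    (hGc.intervalIntegrable_of_Icc hT.le)
    (fun t ht => hG.pos _ (hpos t (Ioo_subset_Icc_self ht))) hT
  have hzero := hs.integral_eq_zero hT.le hh (continuousOn_const.mul hGc)
  rw [intervalIntegral.integral_const_mul] at hzero
  linarith

theorem HasZeroPeriodicIndex.homotopy_lienardField (hT : 0 < T) {h b G : unitInterval → ℝ → ℝ}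
    {l ρ : unitInterval → ℝ} {L : ℝ} (hh : Continuous ↿h) (hC : ∀ s x, |h s x| ≤ C)
    (hb : Continuous ↿b) (hB : ∀ s t, |b s t| ≤ B) (hGc : Continuous ↿G)
    (hG : ∀ s, IsNonlinearity A (G s)) (hl : Continuous l) (hL : ∀ s, l s ∈ Icc 0 L)
    (hρ : Continuous ρ) (hρ₀ : ∀ s, 0 ≤ ρ s)
    (hno : ∀ s Z, IsPeriodicSolution T (lienardField (h s) (forcing (b s) (G s) (l s))) Z →
      ‖Z 0‖ ≠ ρ s)
    (h0 : HasZeroPeriodicIndex T (lienardField (h 0) (forcing (b 0) (G 0) (l 0))) (ρ 0)) :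
    HasZeroPeriodicIndex T (lienardField (h 1) (forcing (b 1) (G 1) (l 1))) (ρ 1) :=
  HasZeroPeriodicIndex.homotopy hT (continuous_lienardField hh (continuous_forcing hb hGc hl))
    (fun s t z => norm_lienardField_forcing_le_one_add (hC s) (hG s) (hB s t) (hL s) z)
    hρ hρ₀ hno h0

lemma lienardField_saddle (t : ℝ) (z : ℂ) :
    lienardField (fun _ => 0) (forcing (fun _ => -1) (fun s => max s 0) 0) t z =
      Complex.I * starRingEnd ℂ z := by
  have : -max z.re 0 + max (-z.re) 0 = -z.re := by
    rcases le_total z.re 0 with hs | hs <;> simp [hs]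
  apply Complex.ext <;> simp [lienardField, forcing, this]

theorem not_hasZeroPeriodicIndex_neg (hT : 0 < T) (hh : Continuous h) (hC : ∀ s, |h s| ≤ C)
    (hG : IsNonlinearity A G) {r : ℝ} (hr : 0 < r) :
    ¬ HasZeroPeriodicIndex T (lienardField h (forcing (fun _ => -1) G 0)) r := by
  intro hindex
  refine not_hasZeroPeriodicIndex_saddle hT hr ?_
  have hhs : ∀ s : unitInterval, ∀ x, |(1 - (s : ℝ)) * h x| ≤ C := fun s x => by
    rw [abs_mul, abs_of_nonneg (sub_nonneg.2 s.2.2)]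
    exact (mul_le_of_le_one_left (abs_nonneg _) (by linarith [s.2.1])).trans (hC x)
  have hGc := hG.continuous
  have hend := HasZeroPeriodicIndex.homotopy_lienardField hT (B := 1) (L := 0)
    (h := fun s x => (1 - (s : ℝ)) * h x) (b := fun _ _ => -1)
    (G := fun s x => (1 - (s : ℝ)) * G x + s * max x 0) (l := fun _ => 0) (ρ := fun _ => r)
    (by fun_prop) hhs (by fun_prop) (by simp)
    (by fun_prop) (fun s => hG.segment_max_zero s.2)
    continuous_const (by simp) continuous_const (fun _ => hr.le) (fun s Z hZ => ?_)
    (by simpa using hindex)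
  · simpa [funext fun t => funext (lienardField_saddle t)] using hend
  · rw [hZ.apply_zero_eq_zero_of_neg hT (by fun_prop) (hhs s) (hG.segment_max_zero s.2), norm_zero]
    exact hr.ne

end Homotopy

section Existence

/-- Pointwise form of `CondA1` with constants uniform over the intervals: `a ≤ 0` off the closed
set `S`, and every point of `S` lies in an interval on which `a ≥ 0` and whose `ε`-interior
contains an interval of length `ε` on which `a ≥ ε`. -/
structure HasHumps (T ε : ℝ) (a : ℝ → ℝ) (S : Set ℝ) : Prop where
  isClosed : IsClosed S
  nonempty : (S ∩ Icc 0 T).Nonempty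
  nonpos : ∀ t ∈ Icc 0 T, t ∉ S → a t ≤ 0
  pos : 0 < ε
  exists_hump : ∀ s ∈ S ∩ Icc 0 T, ∃ σ τ c, 0 ≤ σ ∧ τ ≤ T ∧ s ∈ Icc σ τ ∧ σ + ε ≤ c ∧
    c + ε ≤ τ - ε ∧ (∀ t ∈ Icc σ τ, 0 ≤ a t) ∧ ∀ t ∈ Icc c (c + ε), ε ≤ a t

/-- The constant of the Harnack inequality at distance `ε` from the ends of an interval on which
the forcing is nonnegative. -/
noncomputable def harnackConst (T C ε : ℝ) : ℝ :=
  1 + Real.exp (C * T) ^ 2 * T / ε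

/-- A growth rate such that nonlinearities growing faster have a priori bounded solutions. -/
noncomputable def growthThreshold (T C ε : ℝ) : ℝ :=
  2 * Real.exp (C * T) ^ 2 / ε ^ 3 * harnackConst T C ε

variable {T C A B K ε s₀ : ℝ} {S : Set ℝ} {a h G : ℝ → ℝ}

lemma harnackConst_pos (hT : 0 < T) (hε : 0 < ε) : 0 < harnackConst T C ε := by
  unfold harnackConst
  positivity

lemma growthThreshold_pos (hT : 0 < T) (hε : 0 < ε) : 0 < growthThreshold T C ε :=
  mul_pos (by positivity) (harnackConst_pos hT hε)

section UpperBound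

variable {l : ℝ} {u v : ℝ → ℝ}

/-- `M` is the maximum of `u`: by the Harnack inequality `u ≥ M / harnackConst T C ε` on the hump
where it is attained, and there the forcing cannot exceed the order of `M`. -/
lemma IsPeriodicLienard.exists_forcing_le_mul_max (hs : IsPeriodicLienard T h (forcing a G l) u v)
    (hT : 0 < T) (hh : Continuous h) (hC : ∀ s, |h s| ≤ C) (hS : HasHumps T ε a S)
    (hG : IsNonlinearity A G) (hl : 0 ≤ l) :
    ∃ M, (∀ t ∈ Icc 0 T, u t ≤ M) ∧
      ∀ m ≥ 0, (∀ s ≥ 0, M ≤ harnackConst T C ε * s → m ≤ G s + l) →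
        m ≤ 2 * Real.exp (C * T) ^ 2 / ε ^ 3 * M := by
  have hε := hS.pos
  have hu : ∀ t ∈ Icc 0 T, 0 ≤ u t := fun t ht =>
    hs.fst_nonneg hT hh (fun t _ s hs => forcing_pos_of_neg a hG hl t hs) ht
  obtain ⟨x, hx, hmax⟩ := hs.exists_mem_forall_fst_le hT hh hS.isClosed hS.nonempty
    fun t ht htS => by
      rw [forcing_of_nonneg a G l t (hu t ht), max_eq_right (hS.nonpos t ht htS), mul_zero,
        add_zero]
      exact mul_nonpos_of_nonpos_of_nonneg (hS.nonpos t ht htS) (hG.nonneg _)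
  refine ⟨u x, hmax, fun m hm hGm => ?_⟩
  obtain ⟨σ, τ, c, hσ, hτ, hxI, hσc, hcτ, ha, haε⟩ := hS.exists_hump x hx
  have hsub : Icc σ τ ⊆ Icc 0 T := Icc_subset_Icc hσ hτ
  have huI : ∀ t ∈ Icc σ τ, 0 ≤ u t := fun t ht => hu t (hsub ht)
  have hforcing : ∀ t ∈ Icc σ τ, forcing a G l t (u t) = a t * (G (u t) + l) := fun t ht =>
    forcing_of_nonneg_of_nonneg G l (ha t ht) (huI t ht)
  have hf : ∀ t ∈ Icc σ τ, 0 ≤ forcing a G l t (u t) := fun t ht => by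
    rw [hforcing t ht]
    exact mul_nonneg (ha t ht) (add_nonneg (hG.nonneg _) hl)
  have hmid : Icc c (c + ε) ⊆ Icc (σ + ε) (τ - ε) := Icc_subset_Icc hσc hcτ
  have hinner : Icc (σ + ε) (τ - ε) ⊆ Icc σ τ := Icc_subset_Icc (by linarith) (by linarith)
  obtain ⟨E, hE⟩ := hs.exists_isIntegratingFactor hT.le hh hC
  have hmass := hE.mul_length_le (Real.exp_pos _) hs hσ hτ hf huI hε (m := ε * m) (M := u x)
    hσc (by linarith) hcτ (by positivity) (fun t ht => ?_)
    fun t ht => hmax t (hsub (hinner (hmid ht)))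
  · rw [add_sub_cancel_left, le_div_iff₀ hε] at hmass
    rw [div_mul_eq_mul_div, le_div_iff₀ (by positivity)]
    exact (by ring : m * ε ^ 3 = ε * m * ε * ε).trans_le hmass
  · have htI := hinner (hmid ht)
    rw [hforcing t htI]
    exact mul_le_mul (haε t ht)
      (hGm _ (huI t htI) (hE.harnack (Real.exp_pos _) hs hσ hτ hf huI hε hxI (hmid ht))) hm
      (ha t htI)

theorem IsPeriodicLienard.le_of_growthThreshold_lt
    (hs : IsPeriodicLienard T h (forcing a G l) u v) (hT : 0 < T) (hh : Continuous h)
    (hC : ∀ s, |h s| ≤ C) (hS : HasHumps T ε a S) (hG : IsNonlinearity A G) (hl : 0 ≤ l)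
    (hs₀ : 0 < s₀) (hK : growthThreshold T C ε < K) (hGK : ∀ s ≥ s₀, K * s ≤ G s) :
    (∀ t ∈ Icc 0 T, u t ≤ harnackConst T C ε * s₀) ∧ l ≤ growthThreshold T C ε * s₀ := by
  have hε := hS.pos
  have hΘ : 0 < harnackConst T C ε := harnackConst_pos hT hε
  have hK₀ : 0 < K := (growthThreshold_pos hT hε).trans hK
  obtain ⟨M, huM, hgrowth⟩ := hs.exists_forcing_le_mul_max hT hh hC hS hG hl
  have hMs₀ : M ≤ harnackConst T C ε * s₀ := by
    by_contra! hlt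
    have hM₀ : 0 < M := (mul_pos hΘ hs₀).trans hlt
    have hle := hgrowth (K * (M / harnackConst T C ε))
      (by positivity) fun s _ hsM => by
        have hMs : M / harnackConst T C ε ≤ s := (div_le_iff₀' hΘ).2 hsM
        have hs₀s : s₀ ≤ s := (le_of_mul_le_mul_left (hlt.le.trans hsM) hΘ)
        linarith [hGK s hs₀s, mul_le_mul_of_nonneg_left hMs hK₀.le]
    rw [← mul_div_assoc, div_le_iff₀ hΘ, mul_right_comm] at hle
    exact hK.not_ge (le_of_mul_le_mul_right hle hM₀)
  refine ⟨fun t ht => (huM t ht).trans hMs₀, ?_⟩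
  calc l ≤ 2 * Real.exp (C * T) ^ 2 / ε ^ 3 * M :=
        hgrowth l hl fun s _ _ => le_add_of_nonneg_left (hG.nonneg s)
    _ ≤ 2 * Real.exp (C * T) ^ 2 / ε ^ 3 * (harnackConst T C ε * s₀) := by gcongr
    _ = growthThreshold T C ε * s₀ := by rw [growthThreshold, mul_assoc]

lemma IsPeriodicSolution.norm_apply_zero_le {L M : ℝ} {Z : ℝ → ℂ}
    (hZ : IsPeriodicSolution T (lienardField h (forcing a G l)) Z) (hT : 0 < T)
    (hh : Continuous h) (hC : ∀ s, |h s| ≤ C) (hB : ∀ t, |a t| ≤ B) (hG : IsNonlinearity A G)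
    (hl : l ∈ Icc 0 L) (hM : ∀ t ∈ Icc 0 T, (Z t).re ≤ M) :
    ‖Z 0‖ ≤ M + Real.exp (C * T) ^ 2 * ((B * A + 1) * M + L * B) * T := by
  have hs := hZ.isPeriodicLienard
  have h0 : (0 : ℝ) ∈ Icc 0 T := left_mem_Icc.2 hT.le
  have habs : ∀ t ∈ Icc 0 T, |(Z t).re| ≤ M := fun t ht => by
    rw [abs_of_nonneg (hs.fst_nonneg hT hh (fun t _ s hs => forcing_pos_of_neg a hG hl.1 t hs) ht)]
    exact hM t ht
  have hBA : 0 ≤ B * A := mul_nonneg ((abs_nonneg _).trans (hB 0)) hG.growth_nonneg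
  obtain ⟨E, hE⟩ := hs.exists_isIntegratingFactor hT.le hh hC
  refine (Complex.norm_le_abs_re_add_abs_im _).trans (add_le_add (habs 0 h0) ?_)
  refine hE.abs_snd_le (Real.exp_pos _) hT hs (fun t ht => ?_) h0
  grw [abs_forcing_le hG (hB t) hl, habs t ht]

end UpperBound

lemma hasZeroPeriodicIndex_forcing_of_forall_not {l ρ : ℝ} (hT : 0 < T) (hh : Continuous h)
    (hC : ∀ s, |h s| ≤ C) (ha : Continuous a) (hB : ∀ t, |a t| ≤ B) (hG : IsNonlinearity A G)
    (hl : 0 ≤ l) (hρ : 0 ≤ ρ)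
    (hno : ∀ Z, ¬ IsPeriodicSolution T (lienardField h (forcing a G l)) Z) :
    HasZeroPeriodicIndex T (lienardField h (forcing a G l)) ρ := by
  have hGc := hG.continuous
  have hfield : Continuous ↿fun _ : Unit => lienardField h (forcing a G l) :=
    continuous_lienardField (by fun_prop)
      (continuous_forcing (by fun_prop) (by fun_prop) continuous_const)
  have hzero : HasZeroPeriodicIndex T (lienardField h (forcing a G l)) 0 :=
    hasZeroPeriodicIndex_zero hT (hfield.comp (continuous_const (y := ()).prodMk continuous_id))
      (fun t z => norm_lienardField_forcing_le_one_add hC hG (hB t) ⟨hl, le_rfl⟩ z)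
      fun Z hZ => (hno Z hZ).elim
  simpa using HasZeroPeriodicIndex.homotopy_lienardField hT (h := fun _ => h) (b := fun _ => a)
    (G := fun _ => G) (l := fun _ => l) (ρ := fun s => s * ρ) (by fun_prop) (fun _ => hC)
    (by fun_prop) (fun _ => hB) (by fun_prop) (fun _ => hG) continuous_const
    (fun _ => ⟨hl, le_rfl⟩) (by fun_prop) (fun s => mul_nonneg s.2.1 hρ)
    (fun s Z hZ => (hno Z hZ).elim) (by simpa using hzero)

theorem exists_hasZeroPeriodicIndex_forcing (hT : 0 < T) (hh : Continuous h) (hC : ∀ s, |h s| ≤ C)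
    (ha : Continuous a) (hB : ∀ t, |a t| ≤ B) (hS : HasHumps T ε a S) (hG : IsNonlinearity A G)
    (hs₀ : 0 < s₀) (hK : growthThreshold T C ε < K) (hGK : ∀ s ≥ s₀, K * s ≤ G s) :
    ∃ ρ > 0, HasZeroPeriodicIndex T (lienardField h (forcing a G 0)) ρ := by
  obtain ⟨Λ, hΛlt⟩ := exists_gt (growthThreshold T C ε * s₀)
  let M := harnackConst T C ε * s₀
  let R := M + Real.exp (C * T) ^ 2 * ((B * A + 1) * M + Λ * B) * T
  have hGc := hG.continuous
  have hΛ : 0 < Λ := (mul_pos (growthThreshold_pos hT hS.pos) hs₀).trans hΛlt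
  have hbound : ∀ l ∈ Icc 0 Λ, ∀ Z, IsPeriodicSolution T (lienardField h (forcing a G l)) Z →
      ‖Z 0‖ ≤ R ∧ l < Λ := by
    intro l hl Z hZ
    obtain ⟨hM, hlΛ⟩ :=
      hZ.isPeriodicLienard.le_of_growthThreshold_lt hT hh hC hS hG hl.1 hs₀ hK hGK
    exact ⟨hZ.norm_apply_zero_le hT hh hC hB hG hl hM, hlΛ.trans_lt hΛlt⟩
  obtain ⟨ρ, hρ⟩ := exists_gt (max R 0)
  have hρ₀ : 0 < ρ := (le_max_right _ _).trans_lt hρ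
  have hlarge : HasZeroPeriodicIndex T (lienardField h (forcing a G Λ)) ρ :=
    hasZeroPeriodicIndex_forcing_of_forall_not hT hh hC ha hB hG hΛ.le hρ₀.le
      fun Z hZ => (hbound Λ ⟨hΛ.le, le_rfl⟩ Z hZ).2.false
  have hl : ∀ s : unitInterval, (1 - (s : ℝ)) * Λ ∈ Icc 0 Λ := fun s =>
    ⟨mul_nonneg (sub_nonneg.2 s.2.2) hΛ.le, mul_le_of_le_one_left hΛ.le (by linarith [s.2.1])⟩
  refine ⟨ρ, hρ₀, ?_⟩
  simpa using HasZeroPeriodicIndex.homotopy_lienardField hT (h := fun _ => h) (b := fun _ => a)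
    (G := fun _ => G) (l := fun s => (1 - s) * Λ) (ρ := fun _ => ρ) (by fun_prop) (fun _ => hC)
    (by fun_prop) (fun _ => hB) (by fun_prop) (fun _ => hG) (by fun_prop) hl
    continuous_const (fun _ => hρ₀.le)
    (fun s Z hZ => ((hbound _ (hl s) Z hZ).1.trans_lt ((le_max_left _ _).trans_lt hρ)).ne)
    (by simpa using hlarge)

theorem exists_forall_eq_zero_or_lt_norm {c : ℝ} (hT : 0 < T) (hh : Continuous h)
    (hC : ∀ s, |h s| ≤ C) (hB : 0 < B) (hc : 0 < c) (hG : IsNonlinearity A G)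
    (hGlim : Tendsto (fun s => G s / s) (𝓝[>] 0) (𝓝 0)) (hGosc : RegOscAtZero G) :
    ∃ r > 0, ∀ b : ℝ → ℝ, Continuous b → (∀ t, |b t| ≤ B) → ∫ t in 0..T, b t ≤ -c →
      ∀ Z, IsPeriodicSolution T (lienardField h (forcing b G 0)) Z → Z 0 = 0 ∨ r < ‖Z 0‖ := by
  obtain ⟨δ, hδ, hsmall⟩ := exists_lt_of_integral_le_neg (C := C) hT hB hc hG.continuous
    (hG.eq_zero 0 le_rfl) hG.pos hGlim hGosc
  have hκ : 0 ≤ 2 + C + B * A := by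
    have := (abs_nonneg _).trans (hC 0)
    have := hG.growth_nonneg
    positivity
  refine ⟨δ / Real.exp ((2 + C + B * A) * T), by positivity, fun b hb hbB hbc Z hZ => ?_⟩
  refine (hZ.eq_zero_or_isPeriodicLienard hT hh hC hG hbB).imp_right fun ⟨hpos, hs⟩ => ?_
  obtain ⟨t, ht, hlt⟩ := hsmall h b _ _ hh hC hb.continuousOn (fun t _ => hbB t) hbc hs
    (fun t ht => (hpos t ht).le) ⟨0, left_mem_Icc.2 hT.le, hpos 0 (left_mem_Icc.2 hT.le)⟩
  rw [div_lt_iff₀ (Real.exp_pos _)]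
  calc δ < (Z t).re := hlt
    _ ≤ ‖Z t‖ := Complex.re_le_norm _
    _ ≤ ‖Z 0‖ * Real.exp ((2 + C + B * A) * (t - 0)) :=
        hZ.norm_le_mul_exp (fun t z => by
          simpa using norm_lienardField_forcing_le hC hG (hbB t) (L := 0) ⟨le_rfl, le_rfl⟩ z)
          le_rfl ht.1 ht.2
    _ ≤ ‖Z 0‖ * Real.exp ((2 + C + B * A) * T) := by
        grw [sub_zero, ht.2]

theorem exists_not_hasZeroPeriodicIndex_forcing (hT : 0 < T) (hh : Continuous h)
    (hC : ∀ s, |h s| ≤ C) (ha : Continuous a) (hB : ∀ t, |a t| ≤ B)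
    (hneg : ∫ t in 0..T, a t < 0) (hG : IsNonlinearity A G)
    (hGlim : Tendsto (fun s => G s / s) (𝓝[>] 0) (𝓝 0)) (hGosc : RegOscAtZero G) :
    ∃ r > 0, ¬ HasZeroPeriodicIndex T (lienardField h (forcing a G 0)) r := by
  have hB₀ : 0 ≤ B := (abs_nonneg _).trans (hB 0)
  have hGc := hG.continuous
  obtain ⟨r, hr, hsmall⟩ := exists_forall_eq_zero_or_lt_norm (B := B + 1)
    (c := min (-∫ t in 0..T, a t) T) hT hh hC (by positivity) (lt_min (neg_pos.2 hneg) hT)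
    hG hGlim hGosc
  refine ⟨r, hr, fun hindex => not_hasZeroPeriodicIndex_neg hT hh hC hG hr ?_⟩
  let b : unitInterval → ℝ → ℝ := fun s t => (1 - (s : ℝ)) * a t - s
  have hbc : Continuous ↿b := by fun_prop
  have hbB : ∀ s t, |b s t| ≤ B + 1 := fun s t => by
    have hs₁ : 0 ≤ 1 - (s : ℝ) := sub_nonneg.2 s.2.2
    calc |b s t| ≤ (1 - s) * |a t| + s := by
          simpa only [abs_mul, abs_of_nonneg hs₁, abs_of_nonneg s.2.1] using
            abs_sub ((1 - (s : ℝ)) * a t) s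
      _ ≤ B + 1 := add_le_add ((mul_le_of_le_one_left (abs_nonneg _) (by linarith [s.2.1])).trans
          (hB t)) s.2.2
  have hbint : ∀ s, ∫ t in 0..T, b s t ≤ -min (-∫ t in 0..T, a t) T := fun s => by
    rw [intervalIntegral.integral_sub (Continuous.intervalIntegrable (by fun_prop) _ _)
      intervalIntegrable_const, intervalIntegral.integral_const_mul,
      intervalIntegral.integral_const, smul_eq_mul, sub_zero]
    nlinarith [min_le_left (-∫ t in 0..T, a t) T, min_le_right (-∫ t in 0..T, a t) T,
      s.2.1, s.2.2]
  have hend := HasZeroPeriodicIndex.homotopy_lienardField hT (h := fun _ => h) (b := b)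
    (G := fun _ => G) (l := fun _ => 0) (ρ := fun _ => r) (L := 0) (by fun_prop) (fun _ => hC) hbc
    hbB (by fun_prop) (fun _ => hG) continuous_const (by simp) continuous_const (fun _ => hr.le)
    (fun s Z hZ => ?_) (by simpa [b] using hindex)
  · simpa [b] using hend
  · rcases hsmall (b s) (by fun_prop) (hbB s) (hbint s) Z hZ with h0 | hlt
    · rw [h0, norm_zero]
      exact hr.ne
    · exact hlt.ne'

theorem exists_pos_isPeriodicLienard (hT : 0 < T) (hh : Continuous h) (hC : ∀ s, |h s| ≤ C)
    (ha : Continuous a) (hS : HasHumps T ε a S) (hB : ∀ t, |a t| ≤ B)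
    (hneg : ∫ t in 0..T, a t < 0) (hG : IsNonlinearity A G)
    (hGlim : Tendsto (fun s => G s / s) (𝓝[>] 0) (𝓝 0)) (hGosc : RegOscAtZero G)
    (hs₀ : 0 < s₀) (hK : growthThreshold T C ε < K) (hGK : ∀ s ≥ s₀, K * s ≤ G s) :
    ∃ u v, IsPeriodicLienard T h (fun t s => a t * G s) u v ∧
      ∀ t ∈ Icc 0 T, u t ∈ Ioc 0 (harnackConst T C ε * s₀) := by
  have hGc := hG.continuous
  obtain ⟨ρ, hρ, hzero⟩ := exists_hasZeroPeriodicIndex_forcing hT hh hC ha hB hS hG hs₀ hK hGK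
  obtain ⟨r, hr, hnonzero⟩ :=
    exists_not_hasZeroPeriodicIndex_forcing hT hh hC ha hB hneg hG hGlim hGosc
  obtain ⟨Z, hZ, hZ₀⟩ : ∃ Z, IsPeriodicSolution T (lienardField h (forcing a G 0)) Z ∧ Z 0 ≠ 0 := by
    by_contra! hall
    have hpos : ∀ s : unitInterval, 0 < (1 - (s : ℝ)) * ρ + s * r := fun s => by
      rcases s.2.1.eq_or_lt with h0 | h0
      · simpa [← h0] using hρ
      · exact add_pos_of_nonneg_of_pos (mul_nonneg (sub_nonneg.2 s.2.2) hρ.le) (mul_pos h0 hr)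
    refine hnonzero ?_
    simpa using HasZeroPeriodicIndex.homotopy_lienardField hT (h := fun _ => h) (b := fun _ => a)
      (G := fun _ => G) (l := fun _ => 0) (ρ := fun s => (1 - s) * ρ + s * r) (L := 0)
      (by fun_prop) (fun _ => hC) (by fun_prop) (fun _ => hB) (by fun_prop) (fun _ => hG)
      continuous_const (by simp) (by fun_prop) (fun s => (hpos s).le)
      (fun s Z hZ => by rw [hall Z hZ, norm_zero]; exact (hpos s).ne) (by simpa using hzero)
  obtain ⟨hpos, hs⟩ := (hZ.eq_zero_or_isPeriodicLienard hT hh hC hG hB).resolve_left hZ₀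
  exact ⟨_, _, hs, fun t ht => ⟨hpos t ht,
    (hZ.isPeriodicLienard.le_of_growthThreshold_lt hT hh hC hS hG le_rfl hs₀ hK hGK).1 t ht⟩⟩

end Existence

section Weight

variable {T : ℝ} {a : ℝ → ℝ}

lemma nonneg_of_ae_restrict_Icc {σ τ : ℝ} (hστ : σ < τ) (ha : ContinuousOn a (Icc σ τ))
    (hpos : ∀ᵐ x ∂volume.restrict (Icc σ τ), 0 ≤ a x) : ∀ t ∈ Icc σ τ, 0 ≤ a t := by
  have heq : EqOn (fun x => |a x|) a (Icc σ τ) :=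
    Measure.eqOn_Icc_of_ae_eq volume hστ.ne (hpos.mono fun x hx => abs_of_nonneg hx) ha.abs ha
  exact fun t ht => heq ht ▸ abs_nonneg (a t)

lemma nonpos_of_ae_restrict_diff {σ τ : ℝ} (hστ : σ < τ) (ha : ContinuousOn a (Icc σ τ))
    {S : Set ℝ} (hS : IsClosed S) (hneg : ∀ᵐ x ∂volume.restrict (Icc σ τ \ S), a x ≤ 0) :
    ∀ t ∈ Icc σ τ, t ∉ S → a t ≤ 0 := by
  have hsub : Icc σ τ \ S ⊆ closure (interior (Icc σ τ \ S)) := by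
    rw [sdiff_eq, interior_inter, interior_Icc, hS.isOpen_compl.interior_eq, inter_comm,
      inter_comm (Ioo σ τ), ← closure_Ioo hστ.ne]
    exact hS.isOpen_compl.inter_closure
  have ha' : ContinuousOn a (Icc σ τ \ S) := ha.mono sdiff_subset
  have heq : EqOn (fun x => -|a x|) a (Icc σ τ \ S) :=
    Measure.eqOn_of_ae_eq (hneg.mono fun x hx => by simp [abs_of_nonpos hx]) ha'.abs.neg ha' hsub
  exact fun t ht htS => heq ⟨ht, htS⟩ ▸ neg_nonpos.2 (abs_nonneg (a t))

lemma exists_pos_of_not_ae_eq_zero {σ τ : ℝ}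
    (hpos : ∀ᵐ x ∂volume.restrict (Icc σ τ), 0 ≤ a x)
    (hne : ¬ ∀ᵐ x ∂volume.restrict (Icc σ τ), a x = 0) : ∃ x ∈ Ioo σ τ, 0 < a x := by
  by_contra! hnonpos
  refine hne ?_
  rw [← restrict_Ioo_eq_restrict_Icc] at hpos ⊢
  filter_upwards [hpos, ae_restrict_mem measurableSet_Ioo] with x hx hxI
  exact le_antisymm (hnonpos x hxI) hx

lemma eventually_exists_forall_le {σ τ x : ℝ} (ha : ContinuousOn a (Icc σ τ)) (hx : x ∈ Ioo σ τ)
    (hax : 0 < a x) :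
    ∀ᶠ ε in 𝓝[>] 0, ∃ c, σ + ε ≤ c ∧ c + ε ≤ τ - ε ∧ ∀ t ∈ Icc c (c + ε), ε ≤ a t := by
  have hcont : ContinuousAt a x := ha.continuousAt (Icc_mem_nhds hx.1 hx.2)
  obtain ⟨r, hr, hball⟩ :=
    Metric.eventually_nhds_iff.1 (hcont.eventually_const_lt (half_lt_self hax))
  have hr' : 0 < min (min r (a x / 2)) (min (x - σ) ((τ - x) / 2)) := by
    have := sub_pos.2 hx.1
    have := sub_pos.2 hx.2
    positivity
  filter_upwards [Ioo_mem_nhdsGT hr'] with ε hε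
  obtain ⟨⟨hεr, hεa⟩, hεσ, hετ⟩ := by simpa only [lt_min_iff] using hε.2
  refine ⟨x, by linarith, by linarith, fun t ht => (hεa.trans (hball ?_)).le⟩
  rw [Real.dist_eq, abs_of_nonneg (sub_nonneg.2 ht.1)]
  linarith [ht.2]

theorem CondA1.exists_hasHumps (ha1 : CondA1 T a) (hT : 0 < T) (ha : ContinuousOn a (Icc 0 T)) :
    ∃ ε S, HasHumps T ε a S := by
  obtain ⟨m, σ, τ, hm, hστ, -, hpos, hne, hneg⟩ := ha1
  have haI : ∀ i, ContinuousOn a (Icc (σ i) (τ i)) := fun i =>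
    ha.mono (Icc_subset_Icc (hστ i).1 (hστ i).2.2)
  choose x hx hax using fun i => exists_pos_of_not_ae_eq_zero (hpos i) (hne i)
  obtain ⟨ε, hhump, hε⟩ := ((eventually_all.2 fun i =>
    eventually_exists_forall_le (haI i) (hx i) (hax i)).and self_mem_nhdsWithin).exists
  have hS : IsClosed (⋃ i, Icc (σ i) (τ i)) := isClosed_iUnion_of_finite fun _ => isClosed_Icc
  refine ⟨ε, ⋃ i, Icc (σ i) (τ i), hS, ?_, nonpos_of_ae_restrict_diff hT ha hS hneg, hε, ?_⟩
  · obtain ⟨h0, hle, hT⟩ := hστ ⟨0, hm⟩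
    exact ⟨σ ⟨0, hm⟩, mem_iUnion.2 ⟨⟨0, hm⟩, left_mem_Icc.2 hle⟩, h0, hle.trans hT⟩
  · rintro s ⟨hs, -⟩
    obtain ⟨i, hi⟩ := mem_iUnion.1 hs
    obtain ⟨c, hσc, hcτ, hc⟩ := hhump i
    exact ⟨σ i, τ i, c, (hστ i).1, (hστ i).2.2, hi, hσc, hcτ,
      nonneg_of_ae_restrict_Icc ((hx i).1.trans (hx i).2) (haI i) (hpos i), hc⟩

lemma HasHumps.congr {ε : ℝ} {S : Set ℝ} {b : ℝ → ℝ} (hS : HasHumps T ε a S)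
    (hab : EqOn a b (Icc 0 T)) : HasHumps T ε b S where
  isClosed := hS.isClosed
  nonempty := hS.nonempty
  nonpos t ht htS := hab ht ▸ hS.nonpos t ht htS
  pos := hS.pos
  exists_hump s hs := by
    obtain ⟨σ, τ, c, hσ, hτ, hsI, hσc, hcτ, ha, haε⟩ := hS.exists_hump s hs
    have hε := hS.pos
    refine ⟨σ, τ, c, hσ, hτ, hsI, hσc, hcτ, fun t ht => ?_, fun t ht => ?_⟩
    · rw [← hab ⟨hσ.trans ht.1, ht.2.trans hτ⟩]
      exact ha t ht
    · rw [← hab ⟨by linarith [ht.1], by linarith [ht.2]⟩]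
      exact haε t ht

lemma exists_continuous_bounded_eqOn_Icc {σ τ : ℝ} (hστ : σ ≤ τ)
    (ha : ContinuousOn a (Icc σ τ)) :
    ∃ b : ℝ → ℝ, Continuous b ∧ EqOn a b (Icc σ τ) ∧ ∃ B, ∀ t, |b t| ≤ B := by
  obtain ⟨B, hB⟩ := isCompact_Icc.exists_bound_of_continuousOn ha
  exact ⟨IccExtend hστ ((Icc σ τ).domRestrict a), ha.domRestrict.Icc_extend',
    fun t ht => (IccExtend_of_mem hστ ((Icc σ τ).domRestrict a) ht).symm, B,
    fun t => hB _ (projIcc σ τ hστ t).2⟩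

end Weight

section Truncation

variable {g G : ℝ → ℝ} {K M : ℝ}

lemma RegOscAtZero.congr (hg : RegOscAtZero g) (hgG : ∀ᶠ s in 𝓝[>] 0, G s = g s) :
    RegOscAtZero G := by
  intro ε hε
  obtain ⟨r, hr, heq⟩ := mem_nhdsGT_iff_exists_Ioo_subset.1 hgG
  obtain ⟨δ, hδ, η, hη, hosc⟩ := hg ε hε
  refine ⟨min δ (r / 2), lt_min hδ (half_pos hr), min η 1, lt_min hη one_pos,
    fun s ω hs hsδ hω => ?_⟩
  rw [lt_min_iff] at hsδ hω
  have hω' := abs_lt.1 hω.2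
  have hGs : G s = g s := heq ⟨hs, by linarith⟩
  have hGω : G (ω * s) = g (ω * s) :=
    heq ⟨mul_pos (by linarith) hs, by nlinarith⟩
  rw [hGs, hGω]
  exact hosc s ω hs hsδ.1 hω.1

/-- The nonlinearity `g` on `[0, M]`, continued by `0` to the left and with slope `K` to the
right; it has linear growth. -/
def truncation (g : ℝ → ℝ) (K M s : ℝ) : ℝ :=
  g (min (max s 0) M) + K * max (s - M) 0

lemma truncation_of_mem {s : ℝ} (hs : s ∈ Icc 0 M) : truncation g K M s = g s := by
  rw [truncation, max_eq_left hs.1, min_eq_left hs.2, max_eq_right (sub_nonpos.2 hs.2), mul_zero,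
    add_zero]

lemma truncation_of_le {s : ℝ} (hM : 0 ≤ M) (hs : M ≤ s) :
    truncation g K M s = g M + K * (s - M) := by
  rw [truncation, max_eq_left (hM.trans hs), min_eq_right hs, max_eq_left (sub_nonneg.2 hs)]

lemma eventually_truncation_eq (hM : 0 < M) : ∀ᶠ s in 𝓝[>] 0, truncation g K M s = g s := by
  filter_upwards [Ioo_mem_nhdsGT hM] with s hs using truncation_of_mem (Ioo_subset_Icc_self hs)

lemma mul_le_truncation {s₀ s : ℝ} (hs₀ : 0 ≤ s₀) (hM : s₀ ≤ M) (hg : ∀ s ≥ s₀, K * s ≤ g s)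
    (hs : s₀ ≤ s) : K * s ≤ truncation g K M s := by
  rcases le_total s M with hsM | hMs
  · rw [truncation_of_mem ⟨hs₀.trans hs, hsM⟩]
    exact hg s hs
  · rw [truncation_of_le (hs₀.trans hM) hMs]
    linarith [hg M hM]

theorem CondG1.exists_isNonlinearity_truncation (hg : CondG1 g)
    (hg₀ : Tendsto (fun s => g s / s) (𝓝[>] 0) (𝓝 0)) (hK : 0 ≤ K) (hM : 0 < M) :
    ∃ A, IsNonlinearity A (truncation g K M) := by
  obtain ⟨hgc, -, hgzero, hgpos⟩ := hg
  have hclamp : ∀ s : ℝ, min (max s 0) M ∈ Icc 0 M := fun s =>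
    ⟨le_min (le_max_right _ _) hM.le, min_le_right _ _⟩
  obtain ⟨Q, hQ⟩ := isCompact_Icc.exists_bound_of_continuousOn
    (hgc.mono (Icc_subset_Ici_self : Icc 0 M ⊆ Ici 0))
  have hQ₀ : 0 ≤ Q := (norm_nonneg _).trans (hQ 0 ⟨le_rfl, hM.le⟩)
  obtain ⟨δ, hδ, hsmall⟩ := mem_nhdsGT_iff_exists_Ioo_subset.1
    ((hg₀.eventually_lt_const one_pos).and (eventually_truncation_eq (g := g) (K := K) hM))
  have hδ : 0 < δ := hδ
  refine ⟨1 + Q / δ + K, ?_, fun s hs => ?_, fun s hs => ?_, fun s hs => ?_⟩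
  · exact (hgc.comp_continuous (by fun_prop) fun s => (hclamp s).1).add (by fun_prop)
  · rw [truncation, max_eq_right hs, min_eq_left hM.le, hgzero, max_eq_right (by linarith),
      mul_zero, add_zero]
  · exact add_pos_of_pos_of_nonneg (hgpos _ (lt_min (hs.trans_le (le_max_left _ _)) hM))
      (mul_nonneg hK (le_max_right _ _))
  · have hKs : 0 ≤ K * s := mul_nonneg hK hs.le
    have hQs : 0 ≤ Q / δ * s := by positivity
    rcases lt_or_ge s δ with hsδ | hsδ
    · obtain ⟨hlt, heq⟩ := hsmall ⟨hs, hsδ⟩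
      rw [div_lt_one hs] at hlt
      linarith
    · have hQle : g (min (max s 0) M) ≤ Q / δ * s := by
        refine ((le_abs_self _).trans (hQ _ (hclamp s))).trans ?_
        rw [div_mul_eq_mul_div, le_div_iff₀ hδ]
        exact mul_le_mul_of_nonneg_left hsδ hQ₀
      have hKle : K * max (s - M) 0 ≤ K * s :=
        mul_le_mul_of_nonneg_left (max_le (by linarith) hs.le) hK
      rw [truncation]
      linarith

end Truncation

theorem exists_pos_isPeriodicLienard_of_eventually_le {T C ε K : ℝ} {a h g : ℝ → ℝ} {S : Set ℝ}
    (hT : 0 < T) (hh : ContinuousOn h (Ici 0)) (hC : ∀ s ≥ 0, |h s| ≤ C)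
    (ha : ContinuousOn a (Icc 0 T)) (hS : HasHumps T ε a S) (hneg : ∫ t in 0..T, a t < 0)
    (hg : CondG1 g) (hosc : RegOscAtZero g) (hg₀ : Tendsto (fun s => g s / s) (𝓝[>] 0) (𝓝 0))
    (hK : growthThreshold T C ε < K) (hgK : ∀ᶠ s in atTop, K ≤ g s / s) :
    ∃ u v, IsPeriodicLienard T h (fun t s => a t * g s) u v ∧ ∀ t ∈ Icc 0 T, 0 < u t := by
  obtain ⟨b, hb, hab, B, hB⟩ := exists_continuous_bounded_eqOn_Icc hT.le ha
  have hbneg : ∫ t in 0..T, b t < 0 := by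
    rwa [← intervalIntegral.integral_congr (uIcc_of_le hT.le ▸ hab)]
  obtain ⟨s₀, hs₀, hgs₀⟩ : ∃ s₀ > 0, ∀ s ≥ s₀, K * s ≤ g s := by
    obtain ⟨s₀, hs₀⟩ := eventually_atTop.1 (hgK.and (eventually_gt_atTop 0))
    exact ⟨max s₀ 1, lt_max_of_lt_right one_pos, fun s hs =>
      (le_div_iff₀ (hs₀ s ((le_max_left _ _).trans hs)).2).1 (hs₀ s ((le_max_left _ _).trans hs)).1⟩
  set M := max s₀ (harnackConst T C ε * s₀)
  have hM : 0 < M := lt_max_of_lt_left hs₀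
  obtain ⟨A, hG⟩ := hg.exists_isNonlinearity_truncation (K := K) (M := M) hg₀
    ((growthThreshold_pos hT hS.pos).trans hK).le hM
  obtain ⟨u, v, hs, hu⟩ := exists_pos_isPeriodicLienard (h := fun s => h (max s 0)) hT
    (hh.comp_continuous (by fun_prop) fun s => le_max_right s 0)
    (fun s => hC _ (le_max_right s 0)) hb (hS.congr hab) hB hbneg hG
    (hg₀.congr' ((eventually_truncation_eq hM).mono fun s hs => congrArg (· / s) hs.symm))
    (hosc.congr (eventually_truncation_eq hM)) hs₀ hK
    fun s hs => mul_le_truncation hs₀.le (le_max_left _ _) hgs₀ hs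
  refine ⟨u, v, hs.congr (fun t ht => by rw [max_eq_left (hu t ht).1.le]) (fun t ht => ?_),
    fun t ht => (hu t ht).1⟩
  rw [hab ht, truncation_of_mem ⟨(hu t ht).1.le, (hu t ht).2.trans (le_max_right _ _)⟩]

theorem statement_16_general (T : ℝ) (hT : 0 < T) (C : ℝ) (a : ℝ → ℝ)
    (hac : ContinuousOn a (Icc 0 T)) (ha1 : CondA1 T a) (ha2 : ∫ x in 0..T, a x < 0) :
    ∃ K : ℝ, ∀ h : ℝ → ℝ, ContinuousOn h (Ici 0) → (∀ s ≥ 0, |h s| ≤ C) →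
      ∀ g : ℝ → ℝ, CondG1 g → RegOscAtZero g → Tendsto (fun s => g s / s) (𝓝[>] 0) (𝓝 0) →
      (∀ᶠ s in atTop, K ≤ g s / s) →
      ∃ u u' u'' : ℝ → ℝ,
        (∀ x ∈ Icc 0 T, HasDerivWithinAt u (u' x) (Icc 0 T) x) ∧
        (∀ x ∈ Icc 0 T, HasDerivWithinAt u' (u'' x) (Icc 0 T) x) ∧
        ContinuousOn u'' (Icc 0 T) ∧
        (∀ x ∈ Icc 0 T, 0 < u x) ∧
        (∀ x ∈ Icc 0 T, u'' x + h (u x) * u' x + a x * g (u x) = 0) ∧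
        u 0 = u T ∧ u' 0 = u' T := by
  obtain ⟨ε, S, hS⟩ := ha1.exists_hasHumps hT hac
  refine ⟨growthThreshold T C ε + 1, fun h hh hC g hg hosc hg₀ hgK => ?_⟩
  obtain ⟨u, u', hs, hu⟩ := exists_pos_isPeriodicLienard_of_eventually_le hT hh hC hac hS ha2 hg
    hosc hg₀ (lt_add_one _) hgK
  have hcomp : ∀ φ : ℝ → ℝ, ContinuousOn φ (Ici 0) → ContinuousOn (fun t => φ (u t)) (Icc 0 T) :=
    fun φ hφ => hφ.comp hs.continuousOn_fst fun t ht => (hu t ht).le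
  have hu' : ContinuousOn u' (Icc 0 T) := fun t ht =>
    (hs.hasDerivWithinAt_snd t ht).continuousWithinAt
  exact ⟨u, u', _, hs.hasDerivWithinAt_fst, hs.hasDerivWithinAt_snd,
    ((hcomp h hh).mul hu').neg.sub (hac.mul (hcomp g hg.1)), hu, fun t _ => by ring,
    hs.fst_periodic, hs.snd_periodic⟩

/-- Theorem (Liénard type equation): for `h : [0,∞) → ℝ` continuous and bounded,
`g` satisfying (g1), regularly oscillating at zero, with `g(s)/s → 0` as
`s → 0⁺` and `g(s)/s → +∞` as `s → +∞`, and a continuous weight `a` satisfying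
(a1) and (a2), the periodic problem for `u'' + h(u) u' + a(x) g(u) = 0` on
`[0,T]` has at least one positive solution. -/
theorem statement_16
    (T : ℝ) (hT : 0 < T)
    (h : ℝ → ℝ) (hhc : ContinuousOn h (Ici (0:ℝ)))
    (hhb : ∃ C : ℝ, 0 < C ∧ ∀ s : ℝ, 0 ≤ s → |h s| ≤ C)
    (g : ℝ → ℝ) (hg1 : CondG1 g) (hreg : RegOscAtZero g)
    (hg0 : Tendsto (fun s => g s / s) (nhdsWithin 0 (Ioi 0)) (nhds 0))
    (hginf : Tendsto (fun s => g s / s) atTop atTop)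
    (a : ℝ → ℝ) (hac : ContinuousOn a (Icc (0:ℝ) T))
    (ha1 : CondA1 T a)
    (ha2 : (∫ x in (0:ℝ)..T, a x) < 0) :
    ∃ u u' u'' : ℝ → ℝ,
      (∀ x ∈ Icc (0:ℝ) T, HasDerivWithinAt u (u' x) (Icc (0:ℝ) T) x) ∧
      (∀ x ∈ Icc (0:ℝ) T, HasDerivWithinAt u' (u'' x) (Icc (0:ℝ) T) x) ∧
      ContinuousOn u'' (Icc (0:ℝ) T) ∧
      (∀ x ∈ Icc (0:ℝ) T, 0 < u x) ∧
      (∀ x ∈ Icc (0:ℝ) T, u'' x + h (u x) * u' x + a x * g (u x) = 0) ∧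
      u 0 = u T ∧ u' 0 = u' T := by
  obtain ⟨C, -, hC⟩ := hhb
  obtain ⟨K, hK⟩ := statement_16_general T hT C a hac ha1 ha2
  exact hK h hhc hC g hg1 hreg hg0 (hginf.eventually_ge_atTop K)
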